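/- Let S = k[x_1,…,x_{d+2}] with d ≥ 2 and R = S/(f,g) where f,g is a homogeneous S-regular sequence of degree-2 forms. Let E be a torsion-free R-module of rank e and projective dimension one with μ(E) = d+e, minimal free resolution 0 → R^d →φ R^{d+e} → E → 0 with φ consisting of linear entries, E satisfying G_d and I_1(φ) = (x_1,…,x_{d+2})R. Let A = H^0_m(S(E)) with m = (x_1,…,x_{d+2}), and let σ = B(ψ) be the (d+2)×d Jacobian dual of the lift ψ of φ. If ht I(σ) = 3, then the T-module A_1 is minimally generated by d+2 equations of bidegree (1, 2d). -/

import Mathlib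

/-!
STATEMENT 15: With `S`, `R = S/(f,g)`, `E`, `ψ` as in Statement 12, `A = H⁰_m(S(E))`
and `σ = B(ψ)` the `(d+2)×d` Jacobian dual: if `ht I(σ) = 3` then the `T`-module `A_1`
is minimally generated by `d+2` equations of bidegree `(1, 2d)`.
-/

open MvPolynomial

noncomputable section

namespace Stmt15

variable (k : Type) [Field k] (d n : ℕ)

/-- `B = R ⊗_k T = k[x_1,…,x_d,y_1,…,y_n]`. -/
abbrev B := MvPolynomial (Fin d ⊕ Fin n) k

/-- `T = k[y_1,…,y_n]`. -/
abbrev T := MvPolynomial (Fin n) k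

/-- `B` is a `T`-algebra via `y_j ↦ y_j`. -/
instance : Algebra (T k n) (B k d n) :=
  ((rename Sum.inr : T k n →ₐ[k] B k d n).toRingHom).toAlgebra

/-- The bigrading weight: `bideg x_i = (1,0)`, `bideg y_j = (0,1)`. -/
def bwt : (Fin d ⊕ Fin n) → ℕ × ℕ := Sum.elim (fun _ => (1, 0)) (fun _ => (0, 1))

/-- The `x`-degree weight. -/
def wx : (Fin d ⊕ Fin n) → ℕ := Sum.elim (fun _ => 1) (fun _ => 0)

/-- The ideal `m = (x_1,…,x_d)B`. -/
def mxB : Ideal (B k d n) := Ideal.span (Set.range fun i : Fin d => (X (Sum.inl i) : B k d n))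

variable (I : Ideal (B k d n))

/-- `A = H⁰_m(S)`: elements of `S = B/I` annihilated by a power of `m`. -/
def H0 : Submodule (B k d n) (B k d n ⧸ I) :=
  ⨆ N : ℕ, Submodule.torsionBySet (B k d n) (B k d n ⧸ I)
    ((mxB k d n ^ N : Ideal (B k d n)) : Set (B k d n))

/-- The bigraded component of `S = B/I` in bidegree `p`. -/
def Scomp (p : ℕ × ℕ) : Submodule k (B k d n ⧸ I) :=
  (weightedHomogeneousSubmodule k (bwt d n) p).map (Ideal.Quotient.mkₐ k I).toLinearMap

/-- The graded strand `S_j = ⊕_b S_{(j,b)}` of `S` in `x`-degree `j`, as a `T`-module. -/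
def SxDeg (j : ℕ) : Submodule (T k n) (B k d n ⧸ I) :=
  Submodule.span (T k n) ((Ideal.Quotient.mk I) '' {g : B k d n | g.IsWeightedHomogeneous (wx d n) j})

/-- The graded strand of `S` in (possibly negative) `x`-degree `i : ℤ`. -/
def SxDegZ (i : ℤ) : Submodule (T k n) (B k d n ⧸ I) :=
  if 0 ≤ i then SxDeg k d n I i.toNat else ⊥

/-- The graded strand `A_i = ⊕_b A_{(i,b)}` of `A = H⁰_m(S)`, as a `T`-module. -/
def AcompZ (i : ℤ) : Submodule (T k n) (B k d n ⧸ I) :=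
  (H0 k d n I).restrictScalars (T k n) ⊓ SxDegZ k d n I i

/-- The graded component of `T` in (possibly negative) degree `j`. -/
def TcompZ (j : ℤ) : Submodule k (T k n) :=
  if 0 ≤ j then homogeneousSubmodule (Fin n) k j.toNat else ⊥

/-- The ideal of `t × t` minors of a matrix. -/
def minorsIdeal {R : Type} [CommRing R] {m' n' : Type} (M : Matrix m' n' R) (t : ℕ) :
    Ideal R :=
  Ideal.span {x | ∃ (f : Fin t → m') (g : Fin t → n'), x = (M.submatrix f g).det}

/-- `ht I ≥ c`: every prime containing `I` has height (= dimension of the localization)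
at least `c`. -/
def htGE {R : Type} [CommRing R] (I : Ideal R) (c : ℕ) : Prop :=
  ∀ (p : Ideal R) (_ : p.IsPrime), I ≤ p →
    (c : WithBot ℕ∞) ≤ ringKrullDim (Localization.AtPrime p)

set_option synthInstance.maxHeartbeats 1000000
set_option maxHeartbeats 3000000

/-!
Let `W` be the antisymmetric matrix of complementary maximal minors of `σ`. As `W σ = 0`, the forms
`[ℓ] = [x] σ` vanish on every line spanned by two rows of `W`, and these lines sweep out the zero
locus of `ℓ` generically. Since `ht I(σ) ≥ 3`, the sequence
`0 → T^d →σ T^(d+2) →W T^(d+2) →σᵀ T^d` is exact.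

Suppose a linear form with coefficient vector `a` is killed by a power of `m` modulo `(ℓ, f, g)`,
and let `F`, `G` be matrices of `f`, `g`. On each line `f` and `g` restrict to binary quadrics
without common factor, and the degree-two socle of their quotient is spanned by the determinant of
their Jacobian dual, to which the quadratic form `D` of `Gᵀ W F` restricts up to a scalar. Hence
`x_t a ≡ u_t D` with `u : T^(d+2)`; as `[x] σ ≡ 0` this forces `u σ = 0`, so `u = c W`. The matrix
`N = W (G W F - F W G)` satisfies `x_t (c N) ≡ (c W)_t D`, so `a - c N` is a combination of the `ℓ`.
Conversely `m²` kills the rows of `N`. If `c N` lies in the image of `σ`, then `c W = 0` and `c`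
lies in the image of `σ`, whose entries have positive degree; so the `d + 2` rows of `N` are a
minimal generating set.

The coprimality on lines comes from `G_d`. A common factor would define a hypersurface in
`𝔸² × 𝔸^(d+e)`, of dimension `d + e + 1`, that maps generically injectively to the part of
`Spec S(E)` off `V(m)`, whose dimension `G_d` bounds by `d + e`.
-/

open Matrix

section ComplementaryMinors

variable {A : Type*} {d : ℕ}

/-- The square matrix whose rows are `u`, `v` and the columns of `σ`; up to transposition this is
the `(d + 2) × d` matrix `σ` bordered by two extra columns. -/
def bordered (σ : Matrix (Fin (d + 2)) (Fin d) A) (u v : Fin (d + 2) → A) :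
    Matrix (Fin (d + 2)) (Fin (d + 2)) A :=
  of (vecCons u (vecCons v fun j t => σ t j))

lemma bordered_updateRow_zero (σ : Matrix (Fin (d + 2)) (Fin d) A) (u v w : Fin (d + 2) → A) :
    (bordered σ u v).updateRow 0 w = bordered σ w v :=
  Fin.update_cons_zero (α := fun _ => Fin (d + 2) → A) _ _ _

lemma bordered_updateRow_one (σ : Matrix (Fin (d + 2)) (Fin d) A) (u v w : Fin (d + 2) → A) :
    (bordered σ u v).updateRow 1 w = bordered σ u w := by
  change Function.update (vecCons u (vecCons v fun j t => σ t j)) (Fin.succ 0) w = _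
  rw [vecCons, ← Fin.cons_update, vecCons, Fin.update_cons_zero]
  rfl

variable [CommRing A]

/-- The matrix of complementary minors of `σ`: up to sign, the entry at `(a, b)` is the maximal
minor of `σ` that omits the rows `a` and `b`. -/
def complMinors (σ : Matrix (Fin (d + 2)) (Fin d) A) : Matrix (Fin (d + 2)) (Fin (d + 2)) A :=
  of fun a b => (bordered σ (Pi.single a 1) (Pi.single b 1)).det

variable (σ : Matrix (Fin (d + 2)) (Fin d) A)

lemma bordered_mulVec (u v x : Fin (d + 2) → A) :
    bordered σ u v *ᵥ x = vecCons (u ⬝ᵥ x) (vecCons (v ⬝ᵥ x) (x ᵥ* σ)) := by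
  rw [← mulVec_transpose, bordered, cons_mulVec, cons_mulVec]
  rfl

lemma vecMul_bordered (u v : Fin (d + 2) → A) (s t : A) (y : Fin d → A) :
    vecCons s (vecCons t y) ᵥ* bordered σ u v = s • u + (t • v + σ *ᵥ y) := by
  rw [← vecMul_transpose, bordered, cons_vecMul_cons, cons_vecMul_cons]
  rfl

lemma complMinors_swap (a b : Fin (d + 2)) : complMinors σ a b = -complMinors σ b a := by
  have rows : (bordered σ (Pi.single b 1) (Pi.single a 1)).submatrix (Equiv.swap 0 1) id =
      bordered σ (Pi.single a 1) (Pi.single b 1) := by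
    ext i t
    induction i using Fin.cases with
    | zero => simp [bordered]
    | succ i =>
      induction i using Fin.cases with
      | zero => simp [bordered]
      | succ i => simp [bordered, Equiv.swap_apply_of_ne_of_ne, Fin.ext_iff]
  rw [complMinors, of_apply, ← rows, det_permute, Equiv.Perm.sign_swap Fin.zero_ne_one]
  simp

lemma complMinors_self (a : Fin (d + 2)) : complMinors σ a a = 0 :=
  det_zero_of_row_eq (i := 0) (j := 1) Fin.zero_ne_one rfl

lemma adjugate_bordered_zero (a b c : Fin (d + 2)) :
    (bordered σ (Pi.single b 1) (Pi.single c 1)).adjugate a 0 = complMinors σ a c := by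
  rw [adjugate_apply, bordered_updateRow_zero]
  rfl

lemma adjugate_bordered_one (v : Fin (d + 2) → A) (a b : Fin (d + 2)) :
    (bordered σ (Pi.single b 1) v).adjugate a 1 = complMinors σ b a := by
  rw [adjugate_apply, bordered_updateRow_one]
  rfl

lemma det_bordered_single (r : Fin (d + 2)) (v : Fin (d + 2) → A) :
    (bordered σ (Pi.single r 1) v).det = complMinors σ r ⬝ᵥ v := by
  have h : (bordered σ (Pi.single r 1) v * (bordered σ (Pi.single r 1) v).adjugate) 1 1 =
      (bordered σ (Pi.single r 1) v).det := by
    rw [mul_adjugate, Matrix.smul_apply, one_apply_eq, smul_eq_mul, mul_one]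
  rw [← h, mul_apply, dotProduct_comm]
  exact Finset.sum_congr rfl fun t _ => by rw [adjugate_bordered_one]; rfl

lemma complMinors_vecMul (r : Fin (d + 2)) : complMinors σ r ᵥ* σ = 0 := by
  ext j
  change complMinors σ r ⬝ᵥ (fun t => σ t j) = 0
  rw [← det_bordered_single]
  exact det_zero_of_row_eq (i := 1) (j := j.succ.succ) (Fin.succ_injective _ |>.ne
    (Fin.succ_ne_zero j).symm) rfl

lemma mul_complMinors_of_vecMul_eq_zero {σ : Matrix (Fin (d + 2)) (Fin d) A} {x : Fin (d + 2) → A}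
    (hx : x ᵥ* σ = 0) (a b c : Fin (d + 2)) :
    x a * complMinors σ b c = x b * complMinors σ a c + x c * complMinors σ b a := by
  let M := bordered σ (Pi.single b 1) (Pi.single c 1)
  have cramer : M.adjugate *ᵥ (M *ᵥ x) = M.det • x := by
    rw [mulVec_mulVec, adjugate_mul, smul_mulVec, one_mulVec]
  have hMx : M *ᵥ x = vecCons (x b) (vecCons (x c) 0) := by
    rw [bordered_mulVec, hx, single_one_dotProduct, single_one_dotProduct]
  have entry := congrFun cramer a
  rw [hMx] at entry
  simp only [mulVec, dotProduct, Fin.sum_univ_succ, cons_val_zero, cons_val_succ, Pi.zero_apply,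
    mul_zero, Finset.sum_const_zero, add_zero, Fin.succ_zero_eq_one, M, adjugate_bordered_zero,
    adjugate_bordered_one, Pi.smul_apply, smul_eq_mul] at entry
  change _ = complMinors σ b c * x a at entry
  linear_combination -entry

lemma complMinors_smul_of_vecMul_eq_zero {σ : Matrix (Fin (d + 2)) (Fin d) A}
    {x : Fin (d + 2) → A} (hx : x ᵥ* σ = 0) (b c : Fin (d + 2)) :
    complMinors σ b c • x = x c • complMinors σ b - x b • complMinors σ c := by
  ext a
  simp only [Pi.smul_apply, Pi.sub_apply, smul_eq_mul]
  linear_combination mul_complMinors_of_vecMul_eq_zero hx a b c + x b * complMinors_swap σ a c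

lemma exists_complMinors_smul_eq_mulVec {c : Fin (d + 2) → A} (hc : c ᵥ* complMinors σ = 0)
    (a b : Fin (d + 2)) : ∃ y, complMinors σ a b • c = σ *ᵥ y := by
  let M := bordered σ (Pi.single a 1) (Pi.single b 1)
  let z := c ᵥ* M.adjugate
  have cramer : z ᵥ* M = M.det • c := by
    rw [vecMul_vecMul, adjugate_mul, vecMul_smul, vecMul_one]
  have hz0 : z 0 = 0 := by
    have := congrFun hc b
    simpa only [z, M, vecMul, dotProduct, adjugate_bordered_zero, Pi.zero_apply] using this
  have hz1 : z 1 = 0 := by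
    have := congrFun hc a
    simp only [vecMul, dotProduct, Pi.zero_apply] at this
    simp only [z, M, vecMul, dotProduct, adjugate_bordered_one, complMinors_swap σ a, mul_neg,
      Finset.sum_neg_distrib, this, neg_zero]
  have hz : z = vecCons 0 (vecCons 0 fun j => z j.succ.succ) := by
    ext i
    exact Fin.cases hz0 (fun i => Fin.cases hz1 (fun _ => rfl) i) i
  refine ⟨fun j => z j.succ.succ, ?_⟩
  change M.det • c = _
  rw [← cramer, hz, vecMul_bordered]
  simp

lemma complMinors_mul_eq_vecMul_adjugate (y : Fin d → A) (a b : Fin (d + 2)) (j : Fin d) :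
    complMinors σ a b * y j =
      ((σ *ᵥ y) ᵥ* (bordered σ (Pi.single a 1) (Pi.single b 1)).adjugate) j.succ.succ := by
  have rows := vecMul_bordered σ (Pi.single a 1) (Pi.single b 1) 0 0 y
  rw [zero_smul, zero_smul, zero_add, zero_add] at rows
  rw [← rows, vecMul_vecMul, mul_adjugate, vecMul_smul, vecMul_one]
  rfl

lemma det_of_row_zero_eq_single {n : ℕ} {M : Matrix (Fin (n + 1)) (Fin (n + 1)) A}
    (h : M 0 = Pi.single 0 1) : M.det = (M.submatrix Fin.succ Fin.succ).det := by
  rw [det_succ_row_zero, Fin.sum_univ_succ, h]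
  simp

lemma det_submatrix_eq_complMinors_mul (a b : Fin (d + 2)) {f : Fin d → Fin (d + 2)}
    (ha : a ∉ Set.range f) (hb : b ∉ Set.range f) (hab : a ≠ b) :
    (σ.submatrix f id).det =
      complMinors σ a b * ((1 : Matrix _ _ A).submatrix id (vecCons a (vecCons b f))).det := by
  set idx := vecCons a (vecCons b f) with hidx
  have select : bordered σ (Pi.single a 1) (Pi.single b 1) * (1 : Matrix _ _ A).submatrix id idx =
      (bordered σ (Pi.single a 1) (Pi.single b 1)).submatrix id idx := by
    ext i j
    simp [mul_apply, one_apply]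
  have ha' : ∀ i, f i ≠ a := fun i h => ha ⟨i, h⟩
  have hb' : ∀ i, f i ≠ b := fun i h => hb ⟨i, h⟩
  rw [complMinors, of_apply, ← det_mul, select, det_of_row_zero_eq_single,
    det_of_row_zero_eq_single, ← det_transpose]
  · rfl
  · ext j
    induction j using Fin.cases <;> simp [bordered, hidx, hb', Pi.single_apply]
  · ext j
    induction j using Fin.cases with
    | zero => simp [bordered, hidx]
    | succ j => induction j using Fin.cases <;> simp [bordered, hidx, ha', hab.symm]

lemma minor_mem_span_complMinors (f : Fin d → Fin (d + 2)) (g : Fin d → Fin d) :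
    (σ.submatrix f g).det ∈
      Ideal.span (Set.range fun p : Fin (d + 2) × Fin (d + 2) => complMinors σ p.1 p.2) := by
  have two_le : 1 < ((Finset.univ.image f)ᶜ).card := by
    have := Finset.card_image_le (s := Finset.univ) (f := f)
    rw [Finset.card_compl]
    simp only [Fintype.card_fin, Finset.card_univ] at *
    lia
  obtain ⟨a, ha, b, hb, hab⟩ := Finset.one_lt_card.1 two_le
  have factor : σ.submatrix f g = σ.submatrix f id * (1 : Matrix _ _ A).submatrix id g := by
    ext i j
    simp [mul_apply, one_apply]
  rw [factor, det_mul, det_submatrix_eq_complMinors_mul σ a b (by simpa using ha)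
    (by simpa using hb) hab, mul_assoc]
  exact Ideal.mul_mem_right _ _ (Ideal.subset_span ⟨(a, b), rfl⟩)

end ComplementaryMinors

section CoprimeMinors

lemma dvd_of_forall_dvd_mul {A ι : Type*} [CommRing A] [UniqueFactorizationMonoid A] [Finite ι]
    {w : ι → A} (hw : ∀ q, (∀ i, q ∣ w i) → IsUnit q) {q y : A}
    (h : ∀ i, q ∣ w i * y) : q ∣ y := by
  have := Fintype.ofFinite ι
  let : StrongNormalizationMonoid A := Classical.arbitrary _
  let := UniqueFactorizationMonoid.toNormalizedGCDMonoid A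
  have : q ∣ Finset.univ.gcd fun i => w i * y := Finset.dvd_gcd fun i _ => h i
  exact (hw _ fun i => Finset.gcd_dvd (Finset.mem_univ i)).dvd_mul_left.1
    (this.trans (Finset.gcd_mul_right' _ w y).dvd)

/-- The ideal generated by the complementary minors of `σ`. -/
def complMinorsIdeal {A : Type*} [CommRing A] {d : ℕ} (σ : Matrix (Fin (d + 2)) (Fin d) A) :
    Ideal A :=
  Ideal.span (Set.range fun p : Fin (d + 2) × Fin (d + 2) => complMinors σ p.1 p.2)

lemma minorsIdeal_le_complMinorsIdeal {A : Type} [CommRing A] {d : ℕ}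
    (σ : Matrix (Fin (d + 2)) (Fin d) A) : minorsIdeal σ d ≤ complMinorsIdeal σ := by
  rw [minorsIdeal, Ideal.span_le]
  rintro _ ⟨f, g, rfl⟩
  exact minor_mem_span_complMinors σ f g

/-- The maximal minors of `σ` have no common divisor other than units. As `0` is not a unit of a
nontrivial ring, this includes the existence of a nonzero minor. -/
def CoprimeMinors {A : Type*} [CommRing A] {d : ℕ} (σ : Matrix (Fin (d + 2)) (Fin d) A) : Prop :=
  ∀ q, (∀ a b, q ∣ complMinors σ a b) → IsUnit q

variable {A : Type*} [CommRing A] {d : ℕ} {σ : Matrix (Fin (d + 2)) (Fin d) A}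

lemma coprimeMinors_of_one_lt_height [IsNoetherianRing A] (h : 1 < (complMinorsIdeal σ).height) :
    CoprimeMinors σ := by
  intro q hq
  by_contra hu
  have le : complMinorsIdeal σ ≤ Ideal.span {q} :=
    Ideal.span_le.2 <| by
      rintro _ ⟨p, rfl⟩
      exact Ideal.mem_span_singleton.2 (hq _ _)
  exact (h.trans_le (Ideal.height_mono le)).not_ge (Ideal.height_span_singleton_le_one hu)

namespace CoprimeMinors

lemma exists_ne_zero [Nontrivial A] (hσ : CoprimeMinors σ) : ∃ a b, complMinors σ a b ≠ 0 := by
  by_contra! h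
  exact not_isUnit_zero (hσ 0 fun a b => (h a b).symm ▸ dvd_rfl)

lemma mulVec_injective [IsDomain A] (hσ : CoprimeMinors σ) : Function.Injective σ.mulVec := by
  intro y z h
  obtain ⟨a, b, hab⟩ := hσ.exists_ne_zero
  ext j
  refine mul_left_cancel₀ hab ?_
  rw [complMinors_mul_eq_vecMul_adjugate, complMinors_mul_eq_vecMul_adjugate, h]

variable [IsDomain A] [UniqueFactorizationMonoid A]

lemma exists_eq_mulVec_of_smul_eq (hσ : CoprimeMinors σ) {q : A} (hq : q ≠ 0)
    {c : Fin (d + 2) → A} {y : Fin d → A} (h : q • c = σ *ᵥ y) : ∃ z, c = σ *ᵥ z := by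
  have dvd : ∀ j, q ∣ y j := by
    intro j
    refine dvd_of_forall_dvd_mul (w := fun p : Fin (d + 2) × Fin (d + 2) => complMinors σ p.1 p.2)
      (fun r hr => hσ r fun a b => hr (a, b)) fun p => ?_
    rw [complMinors_mul_eq_vecMul_adjugate, ← h, smul_vecMul]
    exact dvd_mul_right _ _
  choose z hz using dvd
  refine ⟨z, smul_right_injective _ hq ?_⟩
  change q • c = q • σ *ᵥ z
  rw [h, ← mulVec_smul]
  exact congrArg _ (funext hz)

lemma exists_eq_mulVec_of_vecMul_complMinors_eq_zero (hσ : CoprimeMinors σ)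
    {c : Fin (d + 2) → A} (hc : c ᵥ* complMinors σ = 0) : ∃ z, c = σ *ᵥ z := by
  obtain ⟨a, b, hab⟩ := hσ.exists_ne_zero
  obtain ⟨y, hy⟩ := exists_complMinors_smul_eq_mulVec σ hc a b
  exact hσ.exists_eq_mulVec_of_smul_eq hab hy

end CoprimeMinors

end CoprimeMinors

section RegularTriple

/-- `α, β, γ` is a weakly regular sequence on `A`, phrased in terms of elements. -/
structure IsRegularTriple {A : Type*} [CommRing A] (α β γ : A) : Prop where
  eq_zero : ∀ a, α * a = 0 → a = 0
  dvd : ∀ a b, β * a = α * b → α ∣ a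
  exists_eq : ∀ a b c, γ * a = α * b + β * c → ∃ b' c', a = α * b' + β * c'

variable {A ι κ μ : Type*} [CommRing A]

lemma IsRegularTriple.map_ringEquiv {A' : Type*} [CommRing A'] {α β γ : A}
    (h : IsRegularTriple α β γ) (e : A ≃+* A') : IsRegularTriple (e α) (e β) (e γ) where
  eq_zero a ha := by
    have := h.eq_zero (e.symm a) (e.injective (by simpa using ha))
    simpa using this
  dvd a b hab := by
    have := map_dvd e (h.dvd (e.symm a) (e.symm b) (e.injective (by simpa using hab)))
    simpa using this
  exists_eq a b c habc := by
    obtain ⟨b', c', heq⟩ :=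
      h.exists_eq (e.symm a) (e.symm b) (e.symm c) (e.injective (by simpa using habc))
    exact ⟨e b', e c', by simpa using congrArg e heq⟩

/-- Exactness at the third spot of `0 → A^ι → A^κ → A^μ` in depth three: the obstruction
is a Koszul cocycle, which a regular triple turns into a coboundary. -/
lemma IsRegularTriple.mem_range {α β γ : A} (h : IsRegularTriple α β γ)
    {f : (ι → A) →ₗ[A] (κ → A)} {g : (κ → A) →ₗ[A] (μ → A)} (hf : Function.Injective f)
    (hfg : LinearMap.range f = LinearMap.ker g) {v : μ → A}
    (hα : α • v ∈ LinearMap.range g) (hβ : β • v ∈ LinearMap.range g)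
    (hγ : γ • v ∈ LinearMap.range g) : v ∈ LinearMap.range g := by
  obtain ⟨p, hp⟩ := hα
  obtain ⟨q, hq⟩ := hβ
  obtain ⟨r, hr⟩ := hγ
  have lift : ∀ {a b : A} {x y : κ → A}, g x = a • v → g y = b • v → ∃ s, f s = b • x - a • y := by
    intro a b x y hx hy
    refine LinearMap.mem_range.1 (hfg ▸ LinearMap.mem_ker.2 ?_)
    rw [map_sub, map_smul, map_smul, hx, hy, smul_comm, sub_self]
  obtain ⟨s, hs⟩ := lift hp hq
  obtain ⟨t, ht⟩ := lift hp hr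
  obtain ⟨u, hu⟩ := lift hq hr
  have cocycle : γ • s = α • (-u) + β • t := by
    apply hf
    rw [map_smul, map_add, map_smul, map_smul, map_neg, hs, ht, hu]
    module
  choose m n hmn using fun i => h.exists_eq _ _ _ (congrFun cocycle i)
  have dvd : ∀ j, α ∣ (p - f n) j := by
    intro j
    refine h.dvd _ ((q + f m) j) ?_
    have hs' : f s = α • f m + β • f n := by
      rw [← map_smul, ← map_smul, ← map_add]
      exact congrArg f (funext hmn)
    have := congrFun (hs.symm.trans hs') j
    simp only [Pi.sub_apply, Pi.add_apply, Pi.smul_apply, smul_eq_mul] at this ⊢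
    linear_combination this
  choose p' hp' using dvd
  have hfn : g (f n) = 0 := LinearMap.mem_ker.1 (hfg ▸ LinearMap.mem_range_self f n)
  have hαv : α • g p' = α • v := by
    rw [← hp, ← map_smul, show α • p' = p - f n from (funext hp').symm, map_sub, hfn, sub_zero]
  refine ⟨p', funext fun i => sub_eq_zero.1 (h.eq_zero _ ?_)⟩
  rw [mul_sub, sub_eq_zero]
  exact congrFun hαv i

lemma CoprimeMinors.exists_eq_vecMul_complMinors [IsDomain A] [UniqueFactorizationMonoid A]
    {d : ℕ} {σ : Matrix (Fin (d + 2)) (Fin d) A} (hσ : CoprimeMinors σ) {α β γ : A}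
    (h : IsRegularTriple α β γ) (hα : α ∈ complMinorsIdeal σ) (hβ : β ∈ complMinorsIdeal σ)
    (hγ : γ ∈ complMinorsIdeal σ) {v : Fin (d + 2) → A} (hv : v ᵥ* σ = 0) :
    ∃ c, v = c ᵥ* complMinors σ := by
  have mem : ∀ {x}, x ∈ complMinorsIdeal σ →
      x • v ∈ LinearMap.range (complMinors σ).vecMulLinear := by
    intro x hx
    suffices complMinorsIdeal σ ≤ (LinearMap.range (complMinors σ).vecMulLinear).comap
      (LinearMap.toSpanSingleton A _ v) from this hx
    refine Ideal.span_le.2 ?_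
    rintro _ ⟨⟨b, c⟩, rfl⟩
    refine ⟨v c • Pi.single b 1 - v b • Pi.single c 1, ?_⟩
    rw [map_sub, map_smul, map_smul, vecMulLinear_apply, vecMulLinear_apply, single_one_vecMul,
      single_one_vecMul]
    exact (complMinors_smul_of_vecMul_eq_zero hv b c).symm
  have exact : LinearMap.range σ.mulVecLin = LinearMap.ker (complMinors σ).vecMulLinear := by
    ext c
    constructor
    · rintro ⟨y, rfl⟩
      refine LinearMap.mem_ker.2 (funext fun b => ?_)
      have skew : (complMinors σ)ᵀ b = -complMinors σ b := funext fun a => complMinors_swap σ a b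
      change (σ *ᵥ y) ⬝ᵥ (complMinors σ)ᵀ b = 0
      rw [skew, dotProduct_neg, dotProduct_comm, dotProduct_mulVec, complMinors_vecMul,
        zero_dotProduct, neg_zero]
    · intro hc
      obtain ⟨z, hz⟩ := hσ.exists_eq_mulVec_of_vecMul_complMinors_eq_zero hc
      exact ⟨z, hz.symm⟩
  obtain ⟨c, hc⟩ := h.mem_range hσ.mulVec_injective exact (mem hα) (mem hβ) (mem hγ)
  exact ⟨c, hc.symm⟩

end RegularTriple

section MonicTriple

open Polynomial

variable {A : Type*} [CommRing A]

lemma height_comap_mk_le_two [IsNoetherianRing A] {α : A[X]} (hα : α.Monic) {π : A}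
    (Q : Ideal (A[X] ⧸ Ideal.span {α})) [Q.IsPrime] (hQ : Q.under A = Ideal.span {π}) :
    (Q.comap (Ideal.Quotient.mk (Ideal.span {α}))).height ≤ 2 := by
  classical
  have := hα.finite_quotient
  set mk := Ideal.Quotient.mk (Ideal.span {α})
  have minimal : Q ∈ (Ideal.map mk (Ideal.span {Polynomial.C π})).minimalPrimes := by
    have := Ideal.IsIntegral.mem_minimalPrimes_map_under (R := A) Q
    rwa [hQ, Ideal.map_span, Set.image_singleton,
      show algebraMap A _ π = mk (Polynomial.C π) from rfl, ← Set.image_singleton,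
      ← Ideal.map_span] at this
  have comap_minimal := Set.mem_image_of_mem (Ideal.comap mk) minimal
  rw [← Ideal.comap_minimalPrimes_eq_of_surjective Ideal.Quotient.mk_surjective,
    Ideal.comap_map_of_surjective' mk Ideal.Quotient.mk_surjective, Ideal.mk_ker,
    ← Ideal.span_insert, ← Finset.coe_pair] at comap_minimal
  exact (Ideal.height_le_card_of_mem_minimalPrimes_span_finset comap_minimal).trans
    (Nat.cast_le.2 Finset.card_le_two)

lemma not_comap_C_le_span_singleton [IsNoetherianRing A] {J : Ideal A[X]} (hJ : 3 ≤ J.height)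
    {α : A[X]} (hα : α.Monic) (hαJ : α ∈ J) {π : A} (hπ : (Ideal.span {π}).IsPrime) :
    ¬ J.comap (Polynomial.C : A →+* A[X]) ≤ Ideal.span {π} := by
  intro le
  have := hα.finite_quotient
  set mk := Ideal.Quotient.mk (Ideal.span {α})
  have contract : (J.map mk).comap (algebraMap A (A[X] ⧸ Ideal.span {α})) ≤ Ideal.span {π} := by
    refine le_trans ?_ le
    change (J.map mk).comap (mk.comp Polynomial.C) ≤ _
    rw [← Ideal.comap_comap, Ideal.comap_map_of_surjective' mk Ideal.Quotient.mk_surjective,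
      Ideal.mk_ker, sup_eq_left.2 ((Ideal.span_singleton_le_iff_mem _).2 hαJ)]
  obtain ⟨Q, hJQ, hQ, hQπ⟩ := Ideal.exists_ideal_over_prime_of_isIntegral _ _ contract
  have le_two := (Ideal.height_mono (Ideal.map_le_iff_le_comap.1 hJQ)).trans
    (height_comap_mk_le_two hα Q hQπ)
  exact absurd (hJ.trans le_two) (by norm_num)

lemma exists_isRelPrime_of_forall_not_le [IsDomain A] [UniqueFactorizationMonoid A] {I : Ideal A}
    (hI : ∀ π : A, (Ideal.span {π}).IsPrime → ¬ I ≤ Ideal.span {π}) :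
    ∃ β ∈ I, ∃ γ ∈ I, β ≠ 0 ∧ IsRelPrime β γ := by
  classical
  have prime_of_mem {β π : A} (h : π ∈ (UniqueFactorizationMonoid.factors β).toFinset) :
      (Ideal.span {π}).IsPrime :=
    have := UniqueFactorizationMonoid.prime_of_factor π (Multiset.mem_toFinset.1 h)
    (Ideal.span_singleton_prime this.ne_zero).2 this
  obtain ⟨β, hβ, β_ne⟩ : ∃ β ∈ I, β ≠ 0 := by
    by_contra! h
    exact hI 0 (by simpa using Ideal.isPrime_bot) fun x hx => by simp [h x hx]
  refine ⟨β, hβ, ?_⟩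
  by_contra! h
  have cover : (I : Set A) ⊆ ⋃ π ∈ (UniqueFactorizationMonoid.factors β).toFinset,
      (Ideal.span {π} : Set A) := by
    intro γ hγ
    have := h γ hγ β_ne
    rw [UniqueFactorizationMonoid.isRelPrime_iff_no_prime_factors β_ne] at this
    push Not at this
    obtain ⟨p, hpβ, hpγ, hp⟩ := this
    obtain ⟨π, hπ, assoc⟩ :=
      UniqueFactorizationMonoid.exists_mem_factors_of_dvd β_ne hp.irreducible hpβ
    exact Set.mem_biUnion (Finset.mem_coe.2 (Multiset.mem_toFinset.2 hπ))
      (Ideal.mem_span_singleton.2 (assoc.symm.dvd.trans hpγ))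
  obtain ⟨π, hπ, le⟩ :=
    (Ideal.subset_union_prime 0 0 fun π hπ _ _ => prime_of_mem hπ).1 cover
  exact hI π (prime_of_mem hπ) le

lemma IsRegularTriple.of_monic [IsDomain A] [DecompositionMonoid A] {α : A[X]} (hα : α.Monic)
    {β γ : A} (hβ : β ≠ 0) (h : IsRelPrime β γ) :
    IsRegularTriple α (Polynomial.C β) (Polynomial.C γ) where
  eq_zero a ha := (mul_eq_zero.1 ha).resolve_left hα.ne_zero
  dvd a b hab := by
    have : (β • a) %ₘ α = 0 := by
      rw [Polynomial.modByMonic_eq_zero_iff_dvd hα, Polynomial.smul_eq_C_mul, hab]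
      exact dvd_mul_right _ _
    rw [Polynomial.smul_modByMonic] at this
    exact (Polynomial.modByMonic_eq_zero_iff_dvd hα).1 ((smul_eq_zero.1 this).resolve_left hβ)
  exists_eq a b c habc := by
    have rem : γ • (a %ₘ α) = β • (c %ₘ α) := by
      rw [← sub_eq_zero, ← Polynomial.smul_modByMonic, ← Polynomial.smul_modByMonic,
        ← Polynomial.sub_modByMonic, Polynomial.modByMonic_eq_zero_iff_dvd hα,
        Polynomial.smul_eq_C_mul, Polynomial.smul_eq_C_mul, habc]
      exact ⟨b, by ring⟩
    obtain ⟨c', hc'⟩ : Polynomial.C β ∣ a %ₘ α := by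
      refine (Polynomial.C_dvd_iff_dvd_coeff _ _).2 fun i => h.dvd_of_dvd_mul_left ?_
      exact ⟨_, congrArg (fun p => p.coeff i) rem⟩
    exact ⟨a /ₘ α, c', by rw [← hc', add_comm, Polynomial.modByMonic_add_div]⟩

lemma exists_isRegularTriple_of_monic_mem [IsDomain A] [UniqueFactorizationMonoid A]
    [IsNoetherianRing A] {J : Ideal A[X]} (hJ : 3 ≤ J.height) {α : A[X]} (hα : α.Monic)
    (hαJ : α ∈ J) : ∃ β ∈ J, ∃ γ ∈ J, IsRegularTriple α β γ := by
  obtain ⟨β, hβ, γ, hγ, β_ne, rel⟩ := exists_isRelPrime_of_forall_not_le fun _ hπ =>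
    not_comap_C_le_span_singleton hJ hα hαJ hπ
  exact ⟨_, hβ, _, hγ, .of_monic hα β_ne rel⟩

end MonicTriple

section NagataTrick

variable {K : Type*} [Field K]

lemma exists_monic_smul_sum {ι : Type*} {A : Type*} [CommRing A] [Algebra K A] {s : Finset ι}
    (hs : s.Nonempty) {c : ι → K} (hc : ∀ i ∈ s, c i ≠ 0) {p : ι → Polynomial A}
    (hp : ∀ i ∈ s, (p i).Monic) (inj : Set.InjOn (fun i => (p i).natDegree) s) :
    ∃ r : K, (r • ∑ i ∈ s, c i • p i).Monic := by
  obtain ⟨m, hm, hmax⟩ := s.exists_max_image (fun i => (p i).natDegree) hs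
  refine ⟨(c m)⁻¹, Polynomial.monic_of_natDegree_le_of_coeff_eq_one (p m).natDegree ?_ ?_⟩
  · refine (Polynomial.natDegree_smul_le _ _).trans
      (Polynomial.natDegree_sum_le_of_forall_le _ _ ?_)
    exact fun i hi => (Polynomial.natDegree_smul_le _ _).trans (hmax i hi)
  · have lower : ∀ i ∈ s, i ≠ m → (c i • p i).coeff (p m).natDegree = 0 := by
      intro i hi him
      rw [Polynomial.coeff_smul, Polynomial.coeff_eq_zero_of_natDegree_lt, smul_zero]
      exact (hmax i hi).lt_of_ne fun h => him (inj hi hm h)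
    rw [Polynomial.coeff_smul, Polynomial.finsetSum_coeff, Finset.sum_eq_single_of_mem m hm lower,
      Polynomial.coeff_smul, (hp m hm).coeff_natDegree, smul_smul, inv_mul_cancel₀ (hc m hm),
      one_smul]

/-- The image of `Xᵢ` under Nagata's change of variables, see `nagataEquiv`. -/
def nagataVar (K : Type*) [Field K] (n N : ℕ) :
    Fin (n + 1) → Polynomial (MvPolynomial (Fin n) K) :=
  Fin.cons Polynomial.X fun i => Polynomial.X ^ N ^ (i.succ : ℕ) + Polynomial.C (X i)

/-- Nagata's change of variables. It turns distinct monomials with exponents below `N` into monic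
polynomials of distinct degrees. -/
def nagataEquiv (K : Type*) [Field K] (n N : ℕ) :
    MvPolynomial (Fin (n + 1)) K ≃ₐ[K] Polynomial (MvPolynomial (Fin n) K) :=
  AlgEquiv.ofAlgHom (aeval (nagataVar K n N))
    (Polynomial.aevalTower (aeval fun i => X i.succ - X 0 ^ N ^ (i.succ : ℕ)) (X 0))
    (Polynomial.algHom_ext' (by ext; simp [nagataVar]) (by simp [nagataVar]))
    (by ext i; refine Fin.cases ?_ (fun i => ?_) i <;> simp [nagataVar])

variable {n N : ℕ}

lemma nagataVar_monic_and_natDegree (hN : N ≠ 0) (i : Fin (n + 1)) :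
    (nagataVar K n N i).Monic ∧ (nagataVar K n N i).natDegree = N ^ (i : ℕ) := by
  refine Fin.cases ?_ (fun i => ?_) i
  · exact ⟨Polynomial.monic_X, by simp [nagataVar]⟩
  · exact ⟨Polynomial.monic_X_pow_add_C _ (pow_ne_zero _ hN), Polynomial.natDegree_X_pow_add_C⟩

lemma prod_nagataVar_monic_and_natDegree (hN : N ≠ 0) (m : Fin (n + 1) → ℕ) :
    (∏ i, nagataVar K n N i ^ m i).Monic ∧
      (∏ i, nagataVar K n N i ^ m i).natDegree = ∑ i, m i * N ^ (i : ℕ) := by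
  have monic : ∀ i ∈ Finset.univ, (nagataVar K n N i ^ m i).Monic := fun i _ =>
    (nagataVar_monic_and_natDegree hN i).1.pow _
  refine ⟨Polynomial.monic_prod_of_monic _ _ monic, ?_⟩
  rw [Polynomial.natDegree_prod_of_monic _ _ monic]
  refine Finset.sum_congr rfl fun i _ => ?_
  obtain ⟨hm, hd⟩ := nagataVar_monic_and_natDegree (K := K) (n := n) hN i
  rw [hm.natDegree_pow, hd]

lemma exists_monic_smul_nagataEquiv {f : MvPolynomial (Fin (n + 1)) K} (hf : f ≠ 0) :
    ∃ N, ∃ r : K, (r • nagataEquiv K n N f).Monic := by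
  set N := f.totalDegree + 1
  have N_ne : N ≠ 0 := Nat.succ_ne_zero _
  have expand : nagataEquiv K n N f =
      ∑ m ∈ f.support, coeff m f • ∏ i, nagataVar K n N i ^ m i := by
    change aeval (nagataVar K n N) f = _
    rw [aeval_def, eval₂_eq']
    exact Finset.sum_congr rfl fun m _ => (Algebra.smul_def _ _).symm
  refine ⟨N, expand ▸ exists_monic_smul_sum (support_nonempty.2 hf) (fun m => mem_support_iff.1)
    (fun m _ => (prod_nagataVar_monic_and_natDegree N_ne m).1) ?_⟩
  intro m hm m' hm' h
  have lt {m : Fin (n + 1) →₀ ℕ} (hm : m ∈ f.support) (i : Fin (n + 1)) : m i < N :=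
    Nat.lt_succ_of_le ((monomial_le_degreeOf i hm).trans (degreeOf_le_totalDegree f i))
  replace h : ∑ i, m i * N ^ (i : ℕ) = ∑ i, m' i * N ^ (i : ℕ) := by
    rw [← (prod_nagataVar_monic_and_natDegree (K := K) N_ne m).2,
      ← (prod_nagataVar_monic_and_natDegree (K := K) N_ne m').2]
    exact h
  have digits := finFunctionFinEquiv.injective (a₁ := fun i => ⟨m i, lt hm i⟩)
    (a₂ := fun i => ⟨m' i, lt hm' i⟩) (Fin.ext (by simpa only [finFunctionFinEquiv_apply] using h))
  exact Finsupp.ext fun i => congrArg Fin.val (congrFun digits i)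

lemma exists_isRegularTriple_of_three_le_height {n : ℕ} (hn : n ≠ 0)
    {I : Ideal (MvPolynomial (Fin n) K)} (hI : 3 ≤ I.height) :
    ∃ α ∈ I, ∃ β ∈ I, ∃ γ ∈ I, IsRegularTriple α β γ := by
  obtain ⟨n, rfl⟩ := Nat.exists_eq_succ_of_ne_zero hn
  obtain ⟨f, hf, f_ne⟩ : ∃ f ∈ I, f ≠ 0 := by
    refine (Submodule.ne_bot_iff I).1 ?_
    rintro rfl
    simp at hI
  obtain ⟨N, r, monic⟩ := exists_monic_smul_nagataEquiv f_ne
  let θ := (nagataEquiv K n N).toRingEquiv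
  have height_comap : 3 ≤ (I.comap θ.symm).height := by rwa [RingEquiv.height_comap]
  have mem : r • nagataEquiv K n N f ∈ I.comap θ.symm := by
    have : θ.symm (r • nagataEquiv K n N f) = r • f := by
      rw [← map_smul]
      exact θ.symm_apply_apply _
    rw [Ideal.mem_comap, this]
    exact I.smul_of_tower_mem r hf
  obtain ⟨β, hβ, γ, hγ, triple⟩ := exists_isRegularTriple_of_monic_mem height_comap monic mem
  exact ⟨_, mem, _, hβ, _, hγ, triple.map_ringEquiv θ.symm⟩

end NagataTrick

lemma le_height_of_htGE {R : Type} [CommRing R] {I : Ideal R} {c : ℕ} (h : htGE I c) :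
    c ≤ I.height := by
  rw [Ideal.height_eq_inf_minimalPrimes]
  refine le_iInf₂ fun p hp => ?_
  have := hp.1.1
  have := h p hp.1.1 hp.1.2
  rw [IsLocalization.AtPrime.ringKrullDim_eq_height p] at this
  exact_mod_cast this

section CommonFactor

variable {P : Type*} [CommRing P] [UniqueFactorizationMonoid P]

lemma exists_dvd_pow_of_forall_prime_dvd {c Δ : P} (hc : c ≠ 0)
    (h : ∀ q, Prime q → q ∣ c → q ∣ Δ) : ∃ N, c ∣ Δ ^ N := by
  induction c using UniqueFactorizationMonoid.induction_on_prime with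
  | h₁ => exact absurd rfl hc
  | h₂ u hu => exact ⟨0, hu.dvd⟩
  | h₃ a q ha hq ih =>
    obtain ⟨N, hN⟩ := ih ha fun p hp hpa => h p hp (hpa.mul_left _)
    exact ⟨N + 1, pow_succ' Δ N ▸ mul_dvd_mul (h q hq (dvd_mul_right _ _)) hN⟩

lemma exists_isRelPrime_factors {F G : P} (hFG : F ≠ 0 ∨ G ≠ 0) :
    ∃ F' G' c, c ≠ 0 ∧ IsRelPrime F' G' ∧ c * F' = F ∧ c * G' = G := by
  rcases hFG with hF | hG
  · obtain ⟨F', G', c, hrel, hcF, hcG⟩ := UniqueFactorizationMonoid.exists_reduced_factors F hF G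
    exact ⟨F', G', c, left_ne_zero_of_mul (hcF ▸ hF), hrel, hcF, hcG⟩
  · obtain ⟨G', F', c, hrel, hcG, hcF⟩ := UniqueFactorizationMonoid.exists_reduced_factors G hG F
    exact ⟨F', G', c, left_ne_zero_of_mul (hcG ▸ hG), hrel.symm, hcF, hcG⟩

variable [IsDomain P]

lemma exists_eq_mul_of_isRelPrime {F G α β : P} (hFG : IsRelPrime F G) (h : α * F = β * G) :
    ∃ κ, α = κ * G ∧ β = κ * F := by
  obtain ⟨κ, rfl⟩ : G ∣ α := hFG.symm.dvd_of_dvd_mul_right ⟨β, by rw [h, mul_comm]⟩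
  by_cases hG : G = 0
  · subst hG
    obtain ⟨u, rfl⟩ := hFG dvd_rfl (dvd_zero _)
    exact ⟨β * ↑u⁻¹, by simp, by simp⟩
  · exact ⟨κ, mul_comm _ _, mul_right_cancel₀ hG (by linear_combination -h)⟩

lemma exists_pow_mul_eq_mul {F G Δ : P} (hFG : F ≠ 0 ∨ G ≠ 0)
    (hΔ : ∀ q, Prime q → q ∣ F → q ∣ G → q ∣ Δ) {α β : P} (h : α * F = β * G) :
    ∃ M κ, Δ ^ M * α = κ * G ∧ Δ ^ M * β = κ * F := by
  obtain ⟨F', G', c, hc, hrel, rfl, rfl⟩ := exists_isRelPrime_factors hFG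
  obtain ⟨M, q, hq⟩ := exists_dvd_pow_of_forall_prime_dvd hc fun p hp hpc =>
    hΔ p hp (hpc.mul_right _) (hpc.mul_right _)
  have h' : α * F' = β * G' := mul_left_cancel₀ hc (by linear_combination h)
  obtain ⟨κ, hα, hβ⟩ := exists_eq_mul_of_isRelPrime hrel h'
  exact ⟨M, q * κ, by rw [hα, hq]; ring, by rw [hβ, hq]; ring⟩

end CommonFactor

section Saturation

variable {P : Type*} [CommRing P]

/-- The saturation `I : Δ^∞`, i.e. the contraction of the extension of `I` to `P[1/Δ]`. -/
def saturation (Δ : P) (I : Ideal P) : Ideal P :=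
  (I.map (algebraMap P (Localization.Away Δ))).comap (algebraMap P (Localization.Away Δ))

lemma mem_saturation {Δ : P} {I : Ideal P} {h : P} :
    h ∈ saturation Δ I ↔ ∃ M, Δ ^ M * h ∈ I := by
  rw [saturation, Ideal.mem_comap,
    IsLocalization.algebraMap_mem_map_algebraMap_iff (Submonoid.powers Δ)]
  simp only [Submonoid.mem_powers_iff, exists_exists_eq_and]

lemma le_saturation (Δ : P) (I : Ideal P) : I ≤ saturation Δ I := Ideal.le_comap_map

end Saturation

section BinaryQuadrics

lemma homogeneousComponent_mul_of_isHomogeneous {ι R : Type*} [CommRing R] (p : MvPolynomial ι R)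
    {F : MvPolynomial ι R} {m : ℕ} (hF : F.IsHomogeneous m) (n : ℕ) :
    homogeneousComponent n (p * F) =
      if m ≤ n then homogeneousComponent (n - m) p * F else 0 := by
  have hterm (i : ℕ) : homogeneousComponent n (homogeneousComponent i p * F) =
      if n = i + m then homogeneousComponent i p * F else 0 :=
    homogeneousComponent_of_mem ((homogeneousComponent_isHomogeneous i p).mul hF)
  conv_lhs => rw [← sum_homogeneousComponent p, Finset.sum_mul, map_sum]
  simp_rw [hterm]
  split_ifs with hmn
  · obtain ⟨q, rfl⟩ := Nat.exists_eq_add_of_le' hmn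
    simp only [add_left_inj, Nat.add_sub_cancel, Finset.sum_ite_eq]
    split_ifs with hq
    · rfl
    · rw [homogeneousComponent_eq_zero, zero_mul]
      simpa using hq
  · exact Finset.sum_eq_zero fun i _ => if_neg (by omega)

variable {A : Type*} [CommRing A]

lemma exists_eq_C_add_mul_X_add_mul_X (κ : MvPolynomial (Fin 2) A) :
    ∃ a b, κ = C (coeff 0 κ) + a * X 0 + b * X 1 := by
  induction κ using MvPolynomial.induction_on with
  | C a => exact ⟨0, 0, by simp⟩
  | add p q hp hq =>
    obtain ⟨a, b, h⟩ := hp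
    obtain ⟨a', b', h'⟩ := hq
    exact ⟨a + a', b + b', by rw [coeff_add, C_add]; linear_combination h + h'⟩
  | mul_X p i _ =>
    have hp : coeff 0 (p * X i) = 0 := by
      rw [← constantCoeff_eq, map_mul, constantCoeff_X, mul_zero]
    rw [hp]
    fin_cases i
    · exact ⟨p, 0, by simp⟩
    · exact ⟨0, p, by simp⟩

lemma exists_eq_mul_X_of_X_mul_eq [IsDomain A] {a b : MvPolynomial (Fin 2) A}
    (h : X 1 * a = X 0 * b) :
    ∃ c, a = X 0 * c ∧ b = X 1 * c := by
  have h0 : Prime (X 0 : MvPolynomial (Fin 2) A) := X_prime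
  obtain ⟨c, rfl⟩ : (X 0 : MvPolynomial (Fin 2) A) ∣ a :=
    (h0.dvd_or_dvd ⟨b, h⟩).resolve_left (by rw [X_dvd_X]; simp)
  exact ⟨c, rfl, mul_left_cancel₀ h0.ne_zero (by linear_combination -h)⟩

/-- The binary form `X₀ F₀ + X₁ F₁` with coefficients `F₀`, `F₁`. -/
def binaryForm (F : Fin 2 → MvPolynomial (Fin 2) A) : MvPolynomial (Fin 2) A :=
  X 0 * F 0 + X 1 * F 1

/-- The determinant of the Jacobian dual of the two forms `binaryForm F`, `binaryForm G`; modulo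
them it is annihilated by `X₀` and `X₁`. -/
def jacobianDualDet (F G : Fin 2 → MvPolynomial (Fin 2) A) : MvPolynomial (Fin 2) A :=
  F 0 * G 1 - F 1 * G 0

lemma X_mul_jacobianDualDet_mem (F G : Fin 2 → MvPolynomial (Fin 2) A) (i : Fin 2) :
    X i * jacobianDualDet F G ∈ Ideal.span {binaryForm F, binaryForm G} := by
  rw [Ideal.mem_span_pair]
  fin_cases i
  · exact ⟨G 1, -F 1, by simp only [binaryForm, jacobianDualDet, Fin.zero_eta]; ring⟩
  · exact ⟨-G 0, F 0, by simp only [binaryForm, jacobianDualDet, Fin.mk_one]; ring⟩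

lemma homogeneousComponent_C_pow_mul (δ : A) (M n : ℕ) (p : MvPolynomial (Fin 2) A) :
    homogeneousComponent n (C δ ^ M * p) = C δ ^ M * homogeneousComponent n p := by
  rw [← C_pow, homogeneousComponent_C_mul]

/-- Two binary quadrics `binaryForm F`, `binaryForm G` whose common factors become units once `δ`
is inverted. -/
structure IsQuadricPair (δ : A) (F G : Fin 2 → MvPolynomial (Fin 2) A) : Prop where
  ne_zero : δ ≠ 0
  isHomogeneous_left : ∀ i, (F i).IsHomogeneous 1
  isHomogeneous_right : ∀ i, (G i).IsHomogeneous 1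
  dvd_of_common_prime : ∀ q, Prime q → q ∣ binaryForm F → q ∣ binaryForm G → q ∣ C δ

namespace IsQuadricPair

variable {δ : A} {F G : Fin 2 → MvPolynomial (Fin 2) A}

lemma isHomogeneous_binaryForm_left (h : IsQuadricPair δ F G) : (binaryForm F).IsHomogeneous 2 :=
  ((isHomogeneous_X A 0).mul (h.isHomogeneous_left 0)).add
    ((isHomogeneous_X A 1).mul (h.isHomogeneous_left 1))

lemma isHomogeneous_binaryForm_right (h : IsQuadricPair δ F G) : (binaryForm G).IsHomogeneous 2 :=
  ((isHomogeneous_X A 0).mul (h.isHomogeneous_right 0)).add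
    ((isHomogeneous_X A 1).mul (h.isHomogeneous_right 1))

lemma isHomogeneous_jacobianDualDet (h : IsQuadricPair δ F G) :
    (jacobianDualDet F G).IsHomogeneous 2 :=
  ((h.isHomogeneous_left 0).mul (h.isHomogeneous_right 1)).sub
    ((h.isHomogeneous_left 1).mul (h.isHomogeneous_right 0))

lemma homogeneousComponent_two (h : IsQuadricPair δ F G) (κ l m : MvPolynomial (Fin 2) A) :
    homogeneousComponent 2 (κ * jacobianDualDet F G + l * binaryForm F + m * binaryForm G) =
      C (coeff 0 κ) * jacobianDualDet F G + C (coeff 0 l) * binaryForm F +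
        C (coeff 0 m) * binaryForm G := by
  simp only [map_add, homogeneousComponent_mul_of_isHomogeneous _ h.isHomogeneous_binaryForm_left,
    homogeneousComponent_mul_of_isHomogeneous _ h.isHomogeneous_binaryForm_right,
    homogeneousComponent_mul_of_isHomogeneous _ h.isHomogeneous_jacobianDualDet, le_refl, if_true,
    Nat.sub_self, homogeneousComponent_zero]

lemma homogeneousComponent_one (h : IsQuadricPair δ F G) (κ l m : MvPolynomial (Fin 2) A) :
    homogeneousComponent 1 (κ * jacobianDualDet F G + l * binaryForm F + m * binaryForm G) = 0 := by
  simp [homogeneousComponent_mul_of_isHomogeneous _ h.isHomogeneous_binaryForm_left,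
    homogeneousComponent_mul_of_isHomogeneous _ h.isHomogeneous_binaryForm_right,
    homogeneousComponent_mul_of_isHomogeneous _ h.isHomogeneous_jacobianDualDet]

variable [IsDomain A]

lemma binaryForm_ne_zero_or (h : IsQuadricPair δ F G) : binaryForm F ≠ 0 ∨ binaryForm G ≠ 0 := by
  by_contra! h0
  obtain ⟨c, hc⟩ := h.dvd_of_common_prime (X 0) X_prime (h0.1 ▸ dvd_zero _) (h0.2 ▸ dvd_zero _)
  exact h.ne_zero (by simpa using congrArg constantCoeff hc)

lemma eq_zero_of_C_pow_mul_eq_mul (h : IsQuadricPair δ F G)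
    {κ q p : MvPolynomial (Fin 2) A} (hq : q.IsHomogeneous 2)
    (hp : p.IsHomogeneous 1) {M : ℕ} (e : C δ ^ M * p = κ * q) : p = 0 := by
  have e1 := congrArg (homogeneousComponent 1) e
  rw [homogeneousComponent_mul_of_isHomogeneous _ hq, homogeneousComponent_C_pow_mul,
    homogeneousComponent_eq_self hp] at e1
  simpa [h.ne_zero] using e1

variable [UniqueFactorizationMonoid A]

-- Wiebe's colon formula `(f, g) : (X₀, X₁) = (D, f, g)`, up to powers of `δ`.
lemma exists_eq_of_X_mul_mem (h : IsQuadricPair δ F G) {p : MvPolynomial (Fin 2) A}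
    (hp : ∀ i, X i * p ∈ saturation (C δ) (Ideal.span {binaryForm F, binaryForm G})) :
    ∃ M κ l m, C δ ^ M * p =
      κ * jacobianDualDet F G + l * binaryForm F + m * binaryForm G := by
  obtain ⟨M₀, h₀⟩ := mem_saturation.1 (hp 0)
  obtain ⟨M₁, h₁⟩ := mem_saturation.1 (hp 1)
  obtain ⟨α, β, e₀⟩ := Ideal.mem_span_pair.1 h₀
  obtain ⟨γ, ε, e₁⟩ := Ideal.mem_span_pair.1 h₁
  obtain ⟨N, κ, k₁, k₂⟩ := exists_pow_mul_eq_mul h.binaryForm_ne_zero_or h.dvd_of_common_prime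
    (α := C δ ^ M₁ * X 1 * α - C δ ^ M₀ * X 0 * γ) (β := C δ ^ M₀ * X 0 * ε - C δ ^ M₁ * X 1 * β)
    (by linear_combination C δ ^ M₁ * X 1 * e₀ - C δ ^ M₀ * X 0 * e₁)
  simp only [binaryForm] at k₁ k₂
  obtain ⟨l, hl, -⟩ := exists_eq_mul_X_of_X_mul_eq (a := C δ ^ N * C δ ^ M₁ * α - κ * G 1)
    (b := C δ ^ N * C δ ^ M₀ * γ + κ * G 0) (by linear_combination k₁)
  obtain ⟨m, hm, -⟩ := exists_eq_mul_X_of_X_mul_eq (a := C δ ^ N * C δ ^ M₁ * β + κ * F 1)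
    (b := C δ ^ N * C δ ^ M₀ * ε - κ * F 0) (by linear_combination -k₂)
  refine ⟨M₀ + M₁ + N, κ, l, m, mul_left_cancel₀ (X_prime (i := (0 : Fin 2))).ne_zero ?_⟩
  simp only [binaryForm, jacobianDualDet] at e₀ ⊢
  linear_combination -C δ ^ N * C δ ^ M₁ * e₀ + (X 0 * F 0 + X 1 * F 1) * hl +
    (X 0 * G 0 + X 1 * G 1) * hm

lemma mem_saturation_of_homogeneousComponent_two_eq_zero (h : IsQuadricPair δ F G)
    {p : MvPolynomial (Fin 2) A}
    (hp2 : homogeneousComponent 2 p = 0)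
    (hp : ∀ i, X i * p ∈ saturation (C δ) (Ideal.span {binaryForm F, binaryForm G})) :
    p ∈ saturation (C δ) (Ideal.span {binaryForm F, binaryForm G}) := by
  obtain ⟨M, κ, l, m, e⟩ := h.exists_eq_of_X_mul_mem hp
  have e2 := congrArg (homogeneousComponent 2) e
  rw [h.homogeneousComponent_two, homogeneousComponent_C_pow_mul, hp2, mul_zero] at e2
  obtain ⟨a, b, hκ⟩ := exists_eq_C_add_mul_X_add_mul_X κ
  have hsum : C δ ^ M * p = a * (X 0 * jacobianDualDet F G) + b * (X 1 * jacobianDualDet F G) +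
      ((l - C (coeff 0 l)) * binaryForm F + (m - C (coeff 0 m)) * binaryForm G) := by
    rw [e]; linear_combination jacobianDualDet F G * hκ - e2
  rw [mem_saturation]
  refine ⟨M, hsum ▸ add_mem (add_mem ?_ ?_) ?_⟩
  · exact Ideal.mul_mem_left _ _ (X_mul_jacobianDualDet_mem F G 0)
  · exact Ideal.mul_mem_left _ _ (X_mul_jacobianDualDet_mem F G 1)
  · exact Ideal.mem_span_pair.2 ⟨_, _, rfl⟩

lemma eq_zero_of_isHomogeneous_one (h : IsQuadricPair δ F G)
    {p : MvPolynomial (Fin 2) A} (hp1 : p.IsHomogeneous 1)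
    (hp : ∀ i, X i * p ∈ saturation (C δ) (Ideal.span {binaryForm F, binaryForm G})) :
    p = 0 := by
  obtain ⟨M, κ, l, m, e⟩ := h.exists_eq_of_X_mul_mem hp
  have e1 := congrArg (homogeneousComponent 1) e
  rw [h.homogeneousComponent_one, homogeneousComponent_C_pow_mul,
    homogeneousComponent_eq_self hp1] at e1
  exact (mul_eq_zero.1 e1).resolve_left (pow_ne_zero _ (by simpa using h.ne_zero))

lemma exists_pow_mul_sub_mem_of_isHomogeneous_two (h : IsQuadricPair δ F G)
    {p : MvPolynomial (Fin 2) A}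
    (hp2 : p.IsHomogeneous 2)
    (hp : ∀ i, X i * p ∈ saturation (C δ) (Ideal.span {binaryForm F, binaryForm G})) :
    ∃ M, ∃ c : A, C δ ^ M * p - C c * jacobianDualDet F G ∈
      Ideal.span {binaryForm F, binaryForm G} := by
  obtain ⟨M, κ, l, m, e⟩ := h.exists_eq_of_X_mul_mem hp
  have e2 := congrArg (homogeneousComponent 2) e
  rw [h.homogeneousComponent_two, homogeneousComponent_C_pow_mul,
    homogeneousComponent_eq_self hp2] at e2
  exact ⟨M, coeff 0 κ, Ideal.mem_span_pair.2 ⟨_, _, by rw [e2]; abel⟩⟩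

-- Comparing a relation `t D = c f + c' g` with the Koszul relations of `X₀ D` and `X₁ D`
-- forces `t F = t G = 0`.
lemma eq_zero_of_C_mul_jacobianDualDet_mem (h : IsQuadricPair δ F G) {t : A}
    (ht : C t * jacobianDualDet F G ∈ Ideal.span {binaryForm F, binaryForm G}) : t = 0 := by
  obtain ⟨l, m, e⟩ := Ideal.mem_span_pair.1 ht
  obtain ⟨c, c', e2⟩ : ∃ c c' : A,
      C c * binaryForm F + C c' * binaryForm G = C t * jacobianDualDet F G := by
    have e2 := congrArg (homogeneousComponent 2) e
    rw [← zero_add (l * _), ← zero_mul (jacobianDualDet F G), h.homogeneousComponent_two,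
      homogeneousComponent_C_mul,
      homogeneousComponent_eq_self h.isHomogeneous_jacobianDualDet] at e2
    exact ⟨_, _, by simpa using e2⟩
  have hXC (i : Fin 2) (a : A) : (X i * C a : MvPolynomial (Fin 2) A).IsHomogeneous 1 :=
    (isHomogeneous_X A i).mul (isHomogeneous_C _ a)
  have hC {p : MvPolynomial (Fin 2) A} (hp : p.IsHomogeneous 1) : (C t * p).IsHomogeneous 1 := by
    simpa using (isHomogeneous_C (Fin 2) t).mul hp
  have key {α β : MvPolynomial (Fin 2) A} (hα : α.IsHomogeneous 1) (hβ : β.IsHomogeneous 1)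
      (hαβ : α * binaryForm F = β * binaryForm G) : α = 0 ∧ β = 0 := by
    obtain ⟨M, κ, a, b⟩ := exists_pow_mul_eq_mul h.binaryForm_ne_zero_or h.dvd_of_common_prime hαβ
    exact ⟨h.eq_zero_of_C_pow_mul_eq_mul h.isHomogeneous_binaryForm_right hα a,
      h.eq_zero_of_C_pow_mul_eq_mul h.isHomogeneous_binaryForm_left hβ b⟩
  simp only [binaryForm, jacobianDualDet] at e2 key
  obtain ⟨a₀, b₀⟩ := key ((hXC 0 c).sub (hC (h.isHomogeneous_right 1)))
    ((hXC 0 c').add (hC (h.isHomogeneous_left 1))).neg (by linear_combination X 0 * e2)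
  obtain ⟨a₁, b₁⟩ := key ((hXC 1 c).add (hC (h.isHomogeneous_right 0)))
    ((hXC 1 c').sub (hC (h.isHomogeneous_left 0))).neg (by linear_combination X 1 * e2)
  have hF : C t * binaryForm F = 0 := by
    rw [binaryForm]; linear_combination X 0 * b₁ - X 1 * b₀
  have hG : C t * binaryForm G = 0 := by
    rw [binaryForm]; linear_combination X 0 * a₁ - X 1 * a₀
  by_contra hne
  have hCt : (C t : MvPolynomial (Fin 2) A) ≠ 0 := by simpa using hne
  exact h.binaryForm_ne_zero_or.elim (fun hF0 => mul_ne_zero hCt hF0 hF)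
    fun hG0 => mul_ne_zero hCt hG0 hG

lemma mul_mem_saturation_of_isHomogeneous_two (h : IsQuadricPair δ F G)
    {p : MvPolynomial (Fin 2) A} (hp : p.IsHomogeneous 1) {N : ℕ} (hN : 2 ≤ N)
    (hsat : ∀ q : MvPolynomial (Fin 2) A, q.IsHomogeneous N →
      q * p ∈ saturation (C δ) (Ideal.span {binaryForm F, binaryForm G})) :
    ∀ q : MvPolynomial (Fin 2) A, q.IsHomogeneous 2 →
      q * p ∈ saturation (C δ) (Ideal.span {binaryForm F, binaryForm G}) := by
  induction N, hN using Nat.le_induction with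
  | base => exact hsat
  | succ N hN ih =>
    refine ih fun q hq => h.mem_saturation_of_homogeneousComponent_two_eq_zero ?_ fun i => ?_
    · rw [homogeneousComponent_of_mem (hq.mul hp), if_neg (by omega)]
    · rw [← mul_assoc]
      exact hsat _ (add_comm 1 N ▸ (isHomogeneous_X A i).mul hq)

lemma exists_pow_mul_mul_sub_mem (h : IsQuadricPair δ F G) {p : MvPolynomial (Fin 2) A}
    (hp : p.IsHomogeneous 1) {N : ℕ} (hN : 2 ≤ N)
    (hsat : ∀ q : MvPolynomial (Fin 2) A, q.IsHomogeneous N →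
      q * p ∈ saturation (C δ) (Ideal.span {binaryForm F, binaryForm G}))
    {q : MvPolynomial (Fin 2) A} (hq : q.IsHomogeneous 1) :
    ∃ M, ∃ c : A, C δ ^ M * (q * p) - C c * jacobianDualDet F G ∈
      Ideal.span {binaryForm F, binaryForm G} :=
  h.exists_pow_mul_sub_mem_of_isHomogeneous_two (hq.mul hp) fun i => by
    rw [← mul_assoc]
    exact h.mul_mem_saturation_of_isHomogeneous_two hp hN hsat _ ((isHomogeneous_X A i).mul hq)

end IsQuadricPair
end BinaryQuadrics

section Forms

lemma aeval_eq_pow_mul_of_isHomogeneous {ι A Q : Type*} [CommRing A] [CommRing Q] [Algebra A Q]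
    {z w : ι → Q} {c : Q} (hzw : ∀ i, z i = c * w i) {p : MvPolynomial ι A} {n : ℕ}
    (hp : p.IsHomogeneous n) : aeval z p = c ^ n * aeval w p := by
  simp only [aeval_def, eval₂_eq, Finset.mul_sum]
  refine Finset.sum_congr rfl fun m hm => ?_
  have hdeg : ∑ i ∈ m.support, m i = n := by
    have h := hp (mem_support_iff.1 hm)
    rwa [show (1 : ι → ℕ) = fun _ => 1 from rfl, ← Finsupp.degree_eq_weight_one] at h
  simp_rw [hzw, mul_pow, Finset.prod_mul_distrib, Finset.prod_pow_eq_pow_sum, hdeg]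
  ring

variable {ι A : Type*} [Fintype ι] [CommRing A]

/-- The linear form with the given coefficient vector. -/
def linearForm : (ι → A) →ₗ[A] MvPolynomial ι A := Fintype.linearCombination A X

/-- The quadratic form `∑ F i j x_i x_j` of a (not necessarily symmetric) matrix `F`. -/
def quadForm (F : Matrix ι ι A) : MvPolynomial ι A := ∑ i, X i * linearForm (F i)

lemma isHomogeneous_linearForm (c : ι → A) : (linearForm c).IsHomogeneous 1 :=
  IsHomogeneous.sum _ _ _ fun i _ => by
    simpa only [smul_eq_C_mul, zero_add] using (isHomogeneous_C ι (c i)).mul (isHomogeneous_X A i)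

lemma isHomogeneous_quadForm (F : Matrix ι ι A) : (quadForm F).IsHomogeneous 2 :=
  IsHomogeneous.sum _ _ _ fun i _ => (isHomogeneous_X A i).mul (isHomogeneous_linearForm _)

lemma aeval_linearForm {Q : Type*} [CommRing Q] [Algebra A Q] (z : ι → Q) (c : ι → A) :
    aeval z (linearForm c) = z ⬝ᵥ (algebraMap A Q ∘ c) := by
  simp [linearForm, Fintype.linearCombination_apply, dotProduct, Algebra.smul_def, mul_comm]

lemma aeval_quadForm {Q : Type*} [CommRing Q] [Algebra A Q] (z : ι → Q) (F : Matrix ι ι A) :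
    aeval z (quadForm F) = z ⬝ᵥ F.map (algebraMap A Q) *ᵥ z := by
  simp only [quadForm, map_sum, map_mul, aeval_X, aeval_linearForm]
  exact Finset.sum_congr rfl fun i _ => congrArg (z i * ·) (dotProduct_comm _ _)

lemma map_quadForm {Q : Type*} [CommRing Q] (g : A →+* Q) (F : Matrix ι ι A) :
    (quadForm F).map g = quadForm (F.map g) := by
  simp [quadForm, linearForm, Fintype.linearCombination_apply, smul_eq_C_mul]

lemma exists_linearForm_eq {p : MvPolynomial ι A} (hp : p.IsHomogeneous 1) :
    ∃ c, linearForm c = p := by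
  have hconst (t : ι) : pderiv t p = C (coeff 0 (pderiv t p)) :=
    totalDegree_eq_zero_iff_eq_C.1
      ((totalDegree_zero_iff_isHomogeneous _).2 (IsHomogeneous.pderiv (i := t) hp))
  refine ⟨fun t => coeff 0 (pderiv t p), ?_⟩
  have euler := hp.sum_X_mul_pderiv
  rw [one_smul] at euler
  conv_rhs => rw [← euler]
  refine Finset.sum_congr rfl fun t _ => ?_
  rw [smul_eq_C_mul, ← hconst t, mul_comm]

end Forms

section Pairing

variable {A : Type*} [CommRing A] {d : ℕ} {σ : Matrix (Fin (d + 2)) (Fin d) A}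
  {x : Fin (d + 2) → A}

lemma complMinors_map {B : Type*} [CommRing B] (σ : Matrix (Fin (d + 2)) (Fin d) A) (φ : A →+* B) :
    complMinors (σ.map φ) = (complMinors σ).map φ := by
  ext a b
  have hrow (c : Fin (d + 2)) : (Pi.single c 1 : Fin (d + 2) → B) = φ ∘ Pi.single c (1 : A) := by
    ext i
    simp [Pi.single_apply, apply_ite φ]
  simp only [complMinors, map_apply, of_apply, RingHom.map_det, RingHom.mapMatrix_apply]
  congr 1
  ext i t
  refine Fin.cases (by simp [bordered, hrow]) (fun i => ?_) i
  refine Fin.cases (by simp [bordered, hrow]) (fun i => ?_) i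
  simp [bordered]

lemma smul_complMinors_of_vecMul_eq_zero (hx : x ᵥ* σ = 0) (t : Fin (d + 2)) :
    x t • complMinors σ = vecMulVec x (complMinors σ t) - vecMulVec (complMinors σ t) x := by
  ext i j
  have h := mul_complMinors_of_vecMul_eq_zero hx t i j
  rw [complMinors_swap σ i t] at h
  simp only [Matrix.smul_apply, Matrix.sub_apply, vecMulVec_apply, smul_eq_mul]
  linear_combination h

lemma mul_dotProduct_complMinors_mulVec (hx : x ᵥ* σ = 0) (q p : Fin (d + 2) → A)
    (t : Fin (d + 2)) :
    x t * (q ⬝ᵥ complMinors σ *ᵥ p) =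
      (x ⬝ᵥ q) * (complMinors σ t ⬝ᵥ p) - (x ⬝ᵥ p) * (complMinors σ t ⬝ᵥ q) := by
  have h := congrArg (fun M : Matrix _ _ A => q ⬝ᵥ M *ᵥ p) (smul_complMinors_of_vecMul_eq_zero hx t)
  simp only [smul_mulVec, dotProduct_smul, sub_mulVec, vecMulVec_mulVec, dotProduct_sub,
    smul_eq_mul, op_smul_eq_smul] at h
  rw [h, dotProduct_comm q x, dotProduct_comm q (complMinors σ t)]
  ring

lemma dotProduct_transpose_mul_mul_mulVec (F G W : Matrix (Fin (d + 2)) (Fin (d + 2)) A)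
    (x : Fin (d + 2) → A) :
    x ⬝ᵥ (Gᵀ * W * F) *ᵥ x = (G *ᵥ x) ⬝ᵥ W *ᵥ (F *ᵥ x) := by
  rw [← mulVec_mulVec, ← mulVec_mulVec, dotProduct_mulVec, vecMul_transpose]

lemma mul_dotProduct_mulVec_eq_zero (hx : x ᵥ* σ = 0)
    {F G : Matrix (Fin (d + 2)) (Fin (d + 2)) A} (hF : x ⬝ᵥ F *ᵥ x = 0) (hG : x ⬝ᵥ G *ᵥ x = 0)
    (t : Fin (d + 2)) : x t * (x ⬝ᵥ (Gᵀ * complMinors σ * F) *ᵥ x) = 0 := by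
  rw [dotProduct_transpose_mul_mul_mulVec, mul_dotProduct_complMinors_mulVec hx, hF, hG,
    zero_mul, zero_mul, sub_zero]

/-- The matrix `N` such that, modulo `ℓ, f, g`, the linear forms with coefficient vectors the rows
of `N` are killed by products of two variables. Here `F` and `G` are matrices of the quadrics
`f` and `g`. -/
def torsionMatrix (σ : Matrix (Fin (d + 2)) (Fin d) A)
    (F G : Matrix (Fin (d + 2)) (Fin (d + 2)) A) : Matrix (Fin (d + 2)) (Fin (d + 2)) A :=
  complMinors σ * (G * complMinors σ * F - F * complMinors σ * G)

lemma torsionMatrix_map {B : Type*} [CommRing B] (σ : Matrix (Fin (d + 2)) (Fin d) A)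
    (F G : Matrix (Fin (d + 2)) (Fin (d + 2)) A) (φ : A →+* B) :
    torsionMatrix (σ.map φ) (F.map φ) (G.map φ) = (torsionMatrix σ F G).map φ := by
  simp only [torsionMatrix, complMinors_map, Matrix.map_mul, Matrix.map_sub φ (map_sub φ)]

lemma mul_dotProduct_vecMul_torsionMatrix (hx : x ᵥ* σ = 0)
    {F G : Matrix (Fin (d + 2)) (Fin (d + 2)) A} (hF : x ⬝ᵥ F *ᵥ x = 0) (hG : x ⬝ᵥ G *ᵥ x = 0)
    (c : Fin (d + 2) → A) (t : Fin (d + 2)) :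
    x t * (x ⬝ᵥ (c ᵥ* torsionMatrix σ F G)) =
      (c ᵥ* complMinors σ) t * (x ⬝ᵥ (Gᵀ * complMinors σ * F) *ᵥ x) := by
  set W := complMinors σ
  set v := c ᵥ* W
  have hv : v ᵥ* σ = 0 := by
    have hW : W * σ = 0 := funext fun a => complMinors_vecMul σ a
    rw [vecMul_vecMul, hW, vecMul_zero]
  have hrow : x ⬝ᵥ (c ᵥ* torsionMatrix σ F G) =
      (v ᵥ* G) ⬝ᵥ W *ᵥ (F *ᵥ x) - (v ᵥ* F) ⬝ᵥ W *ᵥ (G *ᵥ x) := by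
    rw [torsionMatrix, ← vecMul_vecMul, vecMul_sub, dotProduct_comm, sub_dotProduct]
    simp only [v, W, ← vecMul_vecMul, ← dotProduct_mulVec]
  have polar (M : Matrix (Fin (d + 2)) (Fin (d + 2)) A) : x ⬝ᵥ (v ᵥ* M) = v ⬝ᵥ M *ᵥ x := by
    rw [dotProduct_comm, dotProduct_mulVec]
  rw [hrow, mul_sub, mul_dotProduct_complMinors_mulVec hx, mul_dotProduct_complMinors_mulVec hx,
    hF, hG, polar, polar, dotProduct_transpose_mul_mul_mulVec,
    mul_dotProduct_complMinors_mulVec hv]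
  ring

end Pairing

section SymmetricIdeal

variable {A : Type*} [CommRing A] {d : ℕ} (σ : Matrix (Fin (d + 2)) (Fin d) A)
  (F G : Matrix (Fin (d + 2)) (Fin (d + 2)) A)

/-- The ideal `(ℓ_1, …, ℓ_d, f, g)` over a coefficient ring `A`, where `[ℓ] = [x] σ` and `f`, `g`
are the quadratic forms of `F` and `G`. For `A = T` it defines the symmetric algebra `S(E)`. -/
def symmetricIdeal : Ideal (MvPolynomial (Fin (d + 2)) A) :=
  Ideal.span (Set.range (fun j => linearForm (σᵀ j)) ∪ {quadForm F, quadForm G})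

/-- The quadratic form `D` which spans, up to torsion over `A`, the degree-two part of the
`m`-torsion modulo `symmetricIdeal σ F G`. -/
def socleForm : MvPolynomial (Fin (d + 2)) A := quadForm (Gᵀ * complMinors σ * F)

/-- The restriction of forms to the line through the `r`-th and `s`-th rows of `complMinors σ`,
which is contained in the kernel of `σ` acting from the right. -/
def lineMap (r s : Fin (d + 2)) : MvPolynomial (Fin (d + 2)) A →ₐ[A] MvPolynomial (Fin 2) A :=
  aeval fun t => C (complMinors σ r t) * X 0 + C (complMinors σ s t) * X 1

/-- A section of `lineMap σ r s` up to the scaling of the variables by `complMinors σ r s`. -/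
def lineSection (r s : Fin (d + 2)) :
    MvPolynomial (Fin 2) A →ₐ[A] MvPolynomial (Fin (d + 2)) A :=
  aeval ![X s, -X r]

/-- The coefficients `F₀`, `F₁` in an expression `X₀ F₀ + X₁ F₁` of the restriction of the
quadratic form of `F` under `lineMap σ r s`. -/
def lineCoeff (r s : Fin (d + 2)) : Fin 2 → MvPolynomial (Fin 2) A :=
  ![∑ t, C (complMinors σ r t) * lineMap σ r s (linearForm (F t)),
    ∑ t, C (complMinors σ s t) * lineMap σ r s (linearForm (F t))]

/-- The ideal generated by the restrictions of the two quadratic forms under `lineMap σ r s`. -/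
abbrev lineIdeal (r s : Fin (d + 2)) : Ideal (MvPolynomial (Fin 2) A) :=
  Ideal.span {binaryForm (lineCoeff σ F r s), binaryForm (lineCoeff σ G r s)}

variable {σ F G}

lemma symmetricIdeal_le_iff {I : Ideal (MvPolynomial (Fin (d + 2)) A)} :
    symmetricIdeal σ F G ≤ I ↔
      (∀ j, linearForm (σᵀ j) ∈ I) ∧ quadForm F ∈ I ∧ quadForm G ∈ I := by
  rw [symmetricIdeal, Ideal.span_le, Set.union_subset_iff, Set.range_subset_iff,
    Set.pair_subset_iff]
  rfl

lemma symmetricIdeal_le_ker_aeval_iff {Q : Type*} [CommRing Q] [Algebra A Q]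
    {z : Fin (d + 2) → Q} :
    symmetricIdeal σ F G ≤ RingHom.ker (aeval z : _ →ₐ[A] Q) ↔
      z ᵥ* σ.map (algebraMap A Q) = 0 ∧ z ⬝ᵥ F.map (algebraMap A Q) *ᵥ z = 0 ∧
        z ⬝ᵥ G.map (algebraMap A Q) *ᵥ z = 0 := by
  simp only [symmetricIdeal_le_iff, RingHom.mem_ker, aeval_quadForm, aeval_linearForm, funext_iff]
  rfl

variable (σ F G) in
lemma mk_X_relations :
    let z := fun t => Ideal.Quotient.mk (symmetricIdeal σ F G) (X t)
    z ᵥ* σ.map (algebraMap A _) = 0 ∧ z ⬝ᵥ F.map (algebraMap A _) *ᵥ z = 0 ∧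
      z ⬝ᵥ G.map (algebraMap A _) *ᵥ z = 0 :=
  symmetricIdeal_le_ker_aeval_iff.1 fun p hp => by
    rw [RingHom.mem_ker, ← mkₐ_eq_aeval]
    exact Ideal.Quotient.eq_zero_iff_mem.2 hp

variable (σ F G) in
lemma mem_symmetricIdeal_iff {p : MvPolynomial (Fin (d + 2)) A} :
    p ∈ symmetricIdeal σ F G ↔
      aeval (fun t => Ideal.Quotient.mk (symmetricIdeal σ F G) (X t)) p = 0 := by
  rw [← mkₐ_eq_aeval, ← Ideal.Quotient.eq_zero_iff_mem]
  rfl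

variable (σ F G) in
lemma X_mul_socleForm_mem (t : Fin (d + 2)) :
    X t * socleForm σ F G ∈ symmetricIdeal σ F G := by
  obtain ⟨hσ, hF, hG⟩ := mk_X_relations σ F G
  rw [mem_symmetricIdeal_iff, socleForm, map_mul, aeval_X, aeval_quadForm, Matrix.map_mul,
    Matrix.map_mul, ← complMinors_map, transpose_map]
  exact mul_dotProduct_mulVec_eq_zero hσ hF hG t

variable (σ F G) in
lemma X_mul_linearForm_vecMul_torsionMatrix_sub_mem (c : Fin (d + 2) → A) (t : Fin (d + 2)) :
    X t * linearForm (c ᵥ* torsionMatrix σ F G) - C ((c ᵥ* complMinors σ) t) * socleForm σ F G ∈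
      symmetricIdeal σ F G := by
  obtain ⟨hσ, hF, hG⟩ := mk_X_relations σ F G
  have h := mul_dotProduct_vecMul_torsionMatrix hσ hF hG (algebraMap A _ ∘ c) t
  have map_vecMul (M : Matrix (Fin (d + 2)) (Fin (d + 2)) A) :
      (algebraMap A (_ ⧸ symmetricIdeal σ F G) ∘ c) ᵥ* M.map (algebraMap A _) =
        algebraMap A _ ∘ (c ᵥ* M) :=
    funext fun i => (RingHom.map_vecMul _ _ _ i).symm
  rw [torsionMatrix_map, complMinors_map, map_vecMul, map_vecMul] at h
  rw [mem_symmetricIdeal_iff, socleForm, map_sub, map_mul, map_mul, aeval_X, aeval_C,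
    aeval_linearForm, aeval_quadForm, Matrix.map_mul, Matrix.map_mul,
    transpose_map, sub_eq_zero]
  exact h

variable (σ F G) in
lemma X_mul_X_mul_linearForm_torsionMatrix_mem (i s t : Fin (d + 2)) :
    X s * (X t * linearForm (torsionMatrix σ F G i)) ∈ symmetricIdeal σ F G := by
  have hrow := X_mul_linearForm_vecMul_torsionMatrix_sub_mem σ F G (Pi.single i 1) t
  have hX := Ideal.mul_mem_left _ (X s) hrow
  rw [single_one_vecMul, row, mul_sub, mul_left_comm (X s) (C _)] at hX
  exact (Submodule.sub_mem_iff_left _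
    (Ideal.mul_mem_left _ _ (X_mul_socleForm_mem σ F G s))).1 hX

lemma exists_eq_mulVec_of_linearForm_mem {b : Fin (d + 2) → A}
    (hb : linearForm b ∈ symmetricIdeal σ F G) : ∃ y, b = σ *ᵥ y := by
  let M := (Fin (d + 2) → A) ⧸ LinearMap.range σ.mulVecLin
  let ε : (Fin (d + 2) → A) →ₗ[A] TrivSqZeroExt A M :=
    TrivSqZeroExt.inrHom A M ∘ₗ Submodule.mkQ _
  let z (t : Fin (d + 2)) : TrivSqZeroExt A M := ε (Pi.single t 1)
  have hlin (c : Fin (d + 2) → A) : aeval z (linearForm c) = ε c := by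
    rw [linearForm, Fintype.linearCombination_apply, map_sum]
    simp only [map_smul, aeval_X, z]
    conv_rhs => rw [← Finset.univ_sum_single c, map_sum]
    refine Finset.sum_congr rfl fun t _ => ?_
    rw [← map_smul, ← Pi.single_smul, smul_eq_mul, mul_one]
  have hquad (H : Matrix (Fin (d + 2)) (Fin (d + 2)) A) : aeval z (quadForm H) = 0 := by
    rw [quadForm, map_sum]
    refine Finset.sum_eq_zero fun t _ => ?_
    rw [map_mul, aeval_X, hlin]
    exact TrivSqZeroExt.inr_mul_inr A _ _
  have hker (c : Fin (d + 2) → A) : ε c = 0 ↔ c ∈ LinearMap.range σ.mulVecLin :=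
    TrivSqZeroExt.inr_injective.eq_iff' (TrivSqZeroExt.inr_zero A) |>.trans
      (Submodule.Quotient.mk_eq_zero _)
  have hz : symmetricIdeal σ F G ≤ RingHom.ker (aeval z : _ →ₐ[A] TrivSqZeroExt A M) := by
    refine symmetricIdeal_le_iff.2 ⟨fun j => ?_, hquad F, hquad G⟩
    rw [RingHom.mem_ker, hlin, hker]
    exact ⟨Pi.single j 1, mulVec_single_one σ j⟩
  obtain ⟨y, hy⟩ := (hker b).1 (by rw [← hlin]; exact hz hb)
  exact ⟨y, hy.symm⟩

lemma linearForm_mulVec_mem (y : Fin d → A) : linearForm (σ *ᵥ y) ∈ symmetricIdeal σ F G := by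
  rw [mulVec_eq_sum, map_sum]
  refine Ideal.sum_mem _ fun j _ => ?_
  rw [op_smul_eq_smul, map_smul, smul_eq_C_mul]
  exact Ideal.mul_mem_left _ _ ((symmetricIdeal_le_iff.1 le_rfl).1 j)

section Line

variable {r s : Fin (d + 2)}

lemma lineMap_linearForm (c : Fin (d + 2) → A) :
    lineMap σ r s (linearForm c) =
      C ((complMinors σ *ᵥ c) r) * X 0 + C ((complMinors σ *ᵥ c) s) * X 1 := by
  rw [lineMap, aeval_linearForm]
  simp only [dotProduct, mulVec, map_sum, Finset.sum_mul, ← Finset.sum_add_distrib, map_mul]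
  exact Finset.sum_congr rfl fun t _ => by simp only [Function.comp_apply, algebraMap_eq]; ring

lemma binaryForm_lineCoeff : binaryForm (lineCoeff σ F r s) = lineMap σ r s (quadForm F) := by
  simp only [binaryForm, lineCoeff, quadForm, map_sum, map_mul, Finset.mul_sum,
    ← Finset.sum_add_distrib, cons_val_zero, cons_val_one]
  refine Finset.sum_congr rfl fun t _ => ?_
  rw [lineMap, aeval_X]
  ring

lemma C_mul_lineMap_socleForm :
    C (complMinors σ r s) * lineMap σ r s (socleForm σ F G) =
      -jacobianDualDet (lineCoeff σ F r s) (lineCoeff σ G r s) := by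
  let w (t : Fin (d + 2)) : MvPolynomial (Fin 2) A :=
    C (complMinors σ r t) * X 0 + C (complMinors σ s t) * X 1
  have hcoeff (H : Matrix (Fin (d + 2)) (Fin (d + 2)) A) (a : Fin (d + 2)) :
      ∑ t, C (complMinors σ a t) * lineMap σ r s (linearForm (H t)) =
        complMinors (σ.map C) a ⬝ᵥ H.map C *ᵥ w := by
    rw [complMinors_map]
    refine Finset.sum_congr rfl fun t _ => ?_
    rw [lineMap, aeval_linearForm, dotProduct_comm]
    rfl
  rw [lineMap, socleForm, aeval_quadForm, Matrix.map_mul, Matrix.map_mul, transpose_map,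
    algebraMap_eq, ← complMinors_map, dotProduct_transpose_mul_mul_mulVec]
  have h := mul_dotProduct_complMinors_mulVec (complMinors_vecMul (σ.map C) r)
    (G.map C *ᵥ w) (F.map C *ᵥ w) s
  rw [complMinors_map, map_apply, ← complMinors_map] at h
  rw [h, jacobianDualDet]
  simp only [lineCoeff, cons_val_zero, cons_val_one, hcoeff]
  ring

lemma lineMap_linearForm_transpose (j : Fin d) : lineMap σ r s (linearForm (σᵀ j)) = 0 := by
  have hj (a : Fin (d + 2)) : (complMinors σ *ᵥ σᵀ j) a = 0 :=
    congrFun (complMinors_vecMul σ a) j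
  rw [lineMap_linearForm, hj, hj, C_0, zero_mul, zero_mul, add_zero]

lemma lineMap_mem_of_mem {p : MvPolynomial (Fin (d + 2)) A} (hp : p ∈ symmetricIdeal σ F G) :
    lineMap σ r s p ∈ lineIdeal σ F G r s := by
  suffices h : symmetricIdeal σ F G ≤ (lineIdeal σ F G r s).comap (lineMap σ r s) from h hp
  refine symmetricIdeal_le_iff.2 ⟨fun j => ?_, ?_, ?_⟩
  · rw [Ideal.mem_comap, lineMap_linearForm_transpose]
    exact zero_mem _
  · rw [Ideal.mem_comap, ← binaryForm_lineCoeff]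
    exact Ideal.subset_span (.inl rfl)
  · rw [Ideal.mem_comap, ← binaryForm_lineCoeff]
    exact Ideal.subset_span (.inr rfl)

lemma isHomogeneous_lineMap {p : MvPolynomial (Fin (d + 2)) A} {n : ℕ} (hp : p.IsHomogeneous n) :
    (lineMap σ r s p).IsHomogeneous n := by
  let w (t : Fin (d + 2)) : MvPolynomial (Fin 2) A :=
    C (complMinors σ r t) * X 0 + C (complMinors σ s t) * X 1
  have h := hp.aeval w (n := 1) fun t =>
    (isHomogeneous_C_mul_X _ _).add (isHomogeneous_C_mul_X _ _)
  rw [one_mul] at h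
  exact h

lemma isHomogeneous_lineSection {p : MvPolynomial (Fin 2) A} {n : ℕ} (hp : p.IsHomogeneous n) :
    (lineSection r s p : MvPolynomial (Fin (d + 2)) A).IsHomogeneous n := by
  have h := hp.aeval (![X s, -X r] : Fin 2 → MvPolynomial (Fin (d + 2)) A) (n := 1) fun i => by
    fin_cases i
    · exact isHomogeneous_X A s
    · exact (isHomogeneous_X A r).neg
  rw [one_mul] at h
  exact h

lemma isHomogeneous_lineCoeff (i : Fin 2) : (lineCoeff σ F r s i).IsHomogeneous 1 := by
  have hterm (a t : Fin (d + 2)) :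
      (C (complMinors σ a t) * lineMap σ r s (linearForm (F t))).IsHomogeneous 1 := by
    simpa only [zero_add] using (isHomogeneous_C (Fin 2) (complMinors σ a t)).mul
      (isHomogeneous_lineMap (isHomogeneous_linearForm (F t)))
  fin_cases i
  · exact IsHomogeneous.sum Finset.univ _ _ fun t _ => hterm r t
  · exact IsHomogeneous.sum Finset.univ _ _ fun t _ => hterm s t

lemma lineMap_lineSection_X (i : Fin 2) :
    lineMap σ r s (lineSection r s (X i)) = C (complMinors σ r s) * X i := by
  fin_cases i
  · simp [lineMap, lineSection, complMinors_self]
  · simp [lineMap, lineSection, complMinors_self, complMinors_swap σ s r]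

lemma lineMap_lineSection {p : MvPolynomial (Fin 2) A} {n : ℕ} (hp : p.IsHomogeneous n) :
    lineMap σ r s (lineSection r s p) = C (complMinors σ r s) ^ n * p := by
  have h := aeval_eq_pow_mul_of_isHomogeneous (lineMap_lineSection_X (σ := σ) (r := r) (s := s)) hp
  rwa [aeval_X_left_apply, ← comp_aeval_apply, ← comp_aeval_apply X, aeval_X_left_apply] at h

lemma lineSection_lineMap_sub_mem {p : MvPolynomial (Fin (d + 2)) A} {n : ℕ}
    (hp : p.IsHomogeneous n) :
    lineSection r s (lineMap σ r s p) - C (complMinors σ r s) ^ n * p ∈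
      symmetricIdeal σ F G := by
  obtain ⟨hσ, -, -⟩ := mk_X_relations σ F G
  have hX (t : Fin (d + 2)) :
      Ideal.Quotient.mkₐ A (symmetricIdeal σ F G) (lineSection r s (lineMap σ r s (X t))) =
        algebraMap A _ (complMinors σ r s) * Ideal.Quotient.mk (symmetricIdeal σ F G) (X t) := by
    have h := congrFun (complMinors_smul_of_vecMul_eq_zero hσ r s) t
    simp only [complMinors_map, Pi.smul_apply, Pi.sub_apply, map_apply, smul_eq_mul] at h
    rw [h]
    simp only [lineMap, lineSection, aeval_X, map_add, map_mul, cons_val_zero, cons_val_one,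
      map_neg, algHom_C]
    simp only [AlgHom.commutes, Ideal.Quotient.mkₐ_eq_mk]
    ring
  let restrict := (Ideal.Quotient.mkₐ A (symmetricIdeal σ F G)).comp
    ((lineSection r s).comp (lineMap σ r s))
  have h : restrict p = algebraMap A _ (complMinors σ r s) ^ n * Ideal.Quotient.mkₐ A _ p := by
    rw [aeval_unique restrict, aeval_unique (Ideal.Quotient.mkₐ A (symmetricIdeal σ F G))]
    exact aeval_eq_pow_mul_of_isHomogeneous hX hp
  rw [← Ideal.Quotient.mk_eq_mk_iff_sub_mem, map_mul, map_pow]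
  exact h

lemma lineSection_mem_of_mem {q : MvPolynomial (Fin 2) A} (hq : q ∈ lineIdeal σ F G r s) :
    lineSection r s q ∈ symmetricIdeal σ F G := by
  have hmem {H : Matrix (Fin (d + 2)) (Fin (d + 2)) A} (hH : quadForm H ∈ symmetricIdeal σ F G) :
      lineSection r s (binaryForm (lineCoeff σ H r s)) ∈ symmetricIdeal σ F G := by
    rw [binaryForm_lineCoeff]
    exact (Submodule.sub_mem_iff_left _ (Ideal.mul_mem_left _ _ hH)).1
      (lineSection_lineMap_sub_mem (isHomogeneous_quadForm H))
  obtain ⟨-, hF, hG⟩ := symmetricIdeal_le_iff.1 (le_refl (symmetricIdeal σ F G))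
  suffices h : lineIdeal σ F G r s ≤ (symmetricIdeal σ F G).comap (lineSection r s) from h hq
  rw [lineIdeal, Ideal.span_le, Set.pair_subset_iff]
  exact ⟨hmem hF, hmem hG⟩

lemma mem_saturation_of_lineMap_mem {p : MvPolynomial (Fin (d + 2)) A} {n : ℕ}
    (hp : p.IsHomogeneous n) (h : lineMap σ r s p ∈ lineIdeal σ F G r s) :
    p ∈ saturation (C (complMinors σ r s)) (symmetricIdeal σ F G) :=
  mem_saturation.2 ⟨n, (Submodule.sub_mem_iff_right _ (lineSection_mem_of_mem h)).1
    (lineSection_lineMap_sub_mem hp)⟩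

end Line

end SymmetricIdeal

lemma exists_eq_pow_mul_of_coprime {ι A : Type*} [CommRing A] [IsDomain A]
    [UniqueFactorizationMonoid A] [Finite ι] {w v : ι → A} {M : ι → ℕ}
    (hw : ∀ q, (∀ i, q ∣ w i) → IsUnit q) {i₀ : ι} (hi₀ : w i₀ ≠ 0)
    (hv : ∀ i, w i ≠ 0 → w i₀ ^ M i₀ * v i = w i ^ M i * v i₀) :
    ∃ u, ∀ i, w i ≠ 0 → v i = w i ^ M i * u := by
  obtain ⟨u, hu⟩ : w i₀ ^ M i₀ ∣ v i₀ := by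
    refine dvd_of_forall_dvd_mul (w := fun i => w i ^ (M i + 1)) (fun q hq => ?_) fun i => ?_
    · by_contra hunit
      have hq0 : q ≠ 0 := by
        rintro rfl
        exact pow_ne_zero _ hi₀ (zero_dvd_iff.1 (hq i₀))
      obtain ⟨π, hπ, hπq⟩ := WfDvdMonoid.exists_irreducible_factor hunit hq0
      exact hπ.not_isUnit (hw π fun i => hπ.prime.dvd_of_dvd_pow (hπq.trans (hq i)))
    · by_cases hi : w i = 0
      · simp [hi]
      · exact ⟨w i * v i, by rw [pow_succ, mul_right_comm, ← hv i hi]; ring⟩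
  refine ⟨u, fun i hi => mul_left_cancel₀ (pow_ne_zero (M i₀) hi₀) ?_⟩
  rw [hv i hi, hu]
  ring

section Torsion

variable {A : Type*} [CommRing A] {d : ℕ} {σ : Matrix (Fin (d + 2)) (Fin d) A}
  {F G : Matrix (Fin (d + 2)) (Fin (d + 2)) A}

/-- The restrictions of the two quadratic forms to the generic point of each line spanned by two
rows of `complMinors σ` have no common factor. -/
def IsLineCoprime (σ : Matrix (Fin (d + 2)) (Fin d) A)
    (F G : Matrix (Fin (d + 2)) (Fin (d + 2)) A) : Prop :=
  ∀ r s, complMinors σ r s ≠ 0 → ∀ q, Prime q → q ∣ lineMap σ r s (quadForm F) →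
    q ∣ lineMap σ r s (quadForm G) → q ∣ C (complMinors σ r s)

lemma IsLineCoprime.isQuadricPair (h : IsLineCoprime σ F G) {r s : Fin (d + 2)}
    (hrs : complMinors σ r s ≠ 0) :
    IsQuadricPair (complMinors σ r s) (lineCoeff σ F r s) (lineCoeff σ G r s) where
  ne_zero := hrs
  isHomogeneous_left := isHomogeneous_lineCoeff
  isHomogeneous_right := isHomogeneous_lineCoeff
  dvd_of_common_prime q hq hF hG :=
    h r s hrs q hq (binaryForm_lineCoeff (F := F) ▸ hF) (binaryForm_lineCoeff (F := G) ▸ hG)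

variable [IsDomain A] [UniqueFactorizationMonoid A]

lemma IsLineCoprime.eq_zero_of_C_mul_socleForm_mem (h : IsLineCoprime σ F G) {r s : Fin (d + 2)}
    (hrs : complMinors σ r s ≠ 0) {v : A} (hv : C v * socleForm σ F G ∈ symmetricIdeal σ F G) :
    v = 0 := by
  refine (h.isQuadricPair hrs).eq_zero_of_C_mul_jacobianDualDet_mem ?_
  have hmem := Ideal.mul_mem_left _ (C (complMinors σ r s))
    (lineMap_mem_of_mem (r := r) (s := s) hv)
  rw [map_mul, algHom_C, algebraMap_eq, mul_left_comm, C_mul_lineMap_socleForm, mul_neg] at hmem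
  exact neg_mem_iff.1 hmem

lemma IsLineCoprime.exists_pow_mul_sub_mem (h : IsLineCoprime σ F G) {r s : Fin (d + 2)}
    (hrs : complMinors σ r s ≠ 0) {a : Fin (d + 2) → A} {N : ℕ} (hN : 2 ≤ N)
    (ha : ∀ q : MvPolynomial (Fin (d + 2)) A, q.IsHomogeneous N →
      q * linearForm a ∈ symmetricIdeal σ F G) (t : Fin (d + 2)) :
    ∃ M, ∃ v : A, C (complMinors σ r s) ^ M * (X t * linearForm a) - C v * socleForm σ F G ∈
      symmetricIdeal σ F G := by
  set δ := complMinors σ r s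
  have hline (q : MvPolynomial (Fin 2) A) (hq : q.IsHomogeneous N) :
      q * lineMap σ r s (linearForm a) ∈ saturation (C δ) (lineIdeal σ F G r s) := by
    refine mem_saturation.2 ⟨N, ?_⟩
    rw [← mul_assoc, ← lineMap_lineSection hq, ← map_mul]
    exact lineMap_mem_of_mem (ha _ (isHomogeneous_lineSection hq))
  obtain ⟨M, c, hc⟩ := (h.isQuadricPair hrs).exists_pow_mul_mul_sub_mem
    (isHomogeneous_lineMap (isHomogeneous_linearForm a)) hN hline
    (isHomogeneous_lineMap (σ := σ) (r := r) (s := s) (isHomogeneous_X A t))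
  have hhom : (C (δ ^ M) * (X t * linearForm a) + C (c * δ) * socleForm σ F G).IsHomogeneous 2 :=
    (((isHomogeneous_X A t).mul (isHomogeneous_linearForm a)).C_mul _).add
      ((isHomogeneous_quadForm _).C_mul _)
  have hlift : lineMap σ r s (C (δ ^ M) * (X t * linearForm a) + C (c * δ) * socleForm σ F G) ∈
      lineIdeal σ F G r s := by
    convert hc using 1
    rw [map_add, map_mul, map_mul, map_mul, algHom_C, algHom_C, algebraMap_eq, C_mul, mul_assoc,
      C_mul_lineMap_socleForm, C_pow]
    ring
  obtain ⟨M', hM'⟩ := mem_saturation.1 (mem_saturation_of_lineMap_mem hhom hlift)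
  refine ⟨M' + M, -(δ ^ M' * (c * δ)), ?_⟩
  convert hM' using 1
  simp only [C_neg, C_mul, C_pow]
  ring

lemma IsLineCoprime.exists_forall_sub_mem (h : IsLineCoprime σ F G) (hσ : CoprimeMinors σ)
    {a : Fin (d + 2) → A} {N : ℕ} (hN : 2 ≤ N)
    (ha : ∀ q : MvPolynomial (Fin (d + 2)) A, q.IsHomogeneous N →
      q * linearForm a ∈ symmetricIdeal σ F G) (t : Fin (d + 2)) :
    ∃ u : A, ∀ r s, complMinors σ r s ≠ 0 → X t * linearForm a - C u * socleForm σ F G ∈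
      saturation (C (complMinors σ r s)) (symmetricIdeal σ F G) := by
  have hloc (p : Fin (d + 2) × Fin (d + 2)) : ∃ M, ∃ v : A, complMinors σ p.1 p.2 ≠ 0 →
      C (complMinors σ p.1 p.2) ^ M * (X t * linearForm a) - C v * socleForm σ F G ∈
        symmetricIdeal σ F G := by
    by_cases hp : complMinors σ p.1 p.2 = 0
    · exact ⟨0, 0, fun hne => absurd hp hne⟩
    · obtain ⟨M, v, hv⟩ := h.exists_pow_mul_sub_mem hp hN ha t
      exact ⟨M, v, fun _ => hv⟩
  choose M v hv using hloc
  obtain ⟨r₀, s₀, h₀⟩ := hσ.exists_ne_zero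
  obtain ⟨u, hu⟩ := exists_eq_pow_mul_of_coprime
    (w := fun p : Fin (d + 2) × Fin (d + 2) => complMinors σ p.1 p.2) (M := M) (v := v)
    (fun q hq => hσ q fun a b => hq (a, b)) (i₀ := (r₀, s₀)) h₀ fun p hp => by
      refine sub_eq_zero.1 (h.eq_zero_of_C_mul_socleForm_mem h₀ ?_)
      have key := Ideal.sub_mem _
        (Ideal.mul_mem_left _ (C (complMinors σ p.1 p.2) ^ M p) (hv (r₀, s₀) h₀))
        (Ideal.mul_mem_left _ (C (complMinors σ r₀ s₀) ^ M (r₀, s₀)) (hv p hp))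
      convert key using 1
      simp only [map_sub, map_mul, map_pow]
      ring
  refine ⟨u, fun r s hrs => mem_saturation.2 ⟨M (r, s), ?_⟩⟩
  have key := hv (r, s) hrs
  rw [hu (r, s) hrs, C_mul, C_pow, mul_assoc, ← mul_sub] at key
  exact key

lemma vecMul_eq_zero_of_forall_sub_mem (h : IsLineCoprime σ F G) {r s : Fin (d + 2)}
    (hrs : complMinors σ r s ≠ 0) {a u : Fin (d + 2) → A}
    (hu : ∀ t, X t * linearForm a - C (u t) * socleForm σ F G ∈
      saturation (C (complMinors σ r s)) (symmetricIdeal σ F G)) : u ᵥ* σ = 0 := by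
  funext j
  have hcomb : ∑ t, C (σ t j) * (X t * linearForm a - C (u t) * socleForm σ F G) =
      linearForm (σᵀ j) * linearForm a - C ((u ᵥ* σ) j) * socleForm σ F G := by
    simp only [mul_sub, Finset.sum_sub_distrib, ← mul_assoc, ← Finset.sum_mul, ← C_mul, vecMul,
      dotProduct, map_sum]
    congr 2
    · simp only [linearForm, Fintype.linearCombination_apply, transpose_apply, smul_eq_C_mul]
    · simp only [mul_comm]
  have hmem : C ((u ᵥ* σ) j) * socleForm σ F G ∈
      saturation (C (complMinors σ r s)) (symmetricIdeal σ F G) := by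
    refine (Submodule.sub_mem_iff_right _ (le_saturation _ _ ?_)).1
      (hcomb ▸ Ideal.sum_mem _ fun t _ => Ideal.mul_mem_left _ _ (hu t))
    exact Ideal.mul_mem_right _ _ ((symmetricIdeal_le_iff.1 le_rfl).1 j)
  obtain ⟨M, hM⟩ := mem_saturation.1 hmem
  rw [← mul_assoc, ← C_pow, ← C_mul] at hM
  exact (mul_eq_zero.1 (h.eq_zero_of_C_mul_socleForm_mem hrs hM)).resolve_left
    (pow_ne_zero _ hrs)

lemma exists_eq_mulVec_of_forall_X_mul_mem (h : IsLineCoprime σ F G) (hσ : CoprimeMinors σ)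
    {r s : Fin (d + 2)} (hrs : complMinors σ r s ≠ 0) {b : Fin (d + 2) → A}
    (hb : ∀ t, X t * linearForm b ∈
      saturation (C (complMinors σ r s)) (symmetricIdeal σ F G)) : ∃ y, b = σ *ᵥ y := by
  set δ := complMinors σ r s
  have hzero : lineMap σ r s (linearForm b) = 0 := by
    refine (h.isQuadricPair hrs).eq_zero_of_isHomogeneous_one
      (isHomogeneous_lineMap (isHomogeneous_linearForm b)) fun i => ?_
    have hi : lineSection r s (X i) * linearForm b ∈
        saturation (C δ) (symmetricIdeal σ F G) := by
      fin_cases i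
      · simpa [lineSection] using hb s
      · simpa [lineSection] using hb r
    obtain ⟨M, hM⟩ := mem_saturation.1 hi
    refine mem_saturation.2 ⟨M + 1, ?_⟩
    have := lineMap_mem_of_mem (r := r) (s := s) hM
    rw [map_mul, map_mul, map_pow, lineMap_lineSection (isHomogeneous_X A i), algHom_C,
      algebraMap_eq] at this
    convert this using 1
    ring
  have hmem := lineSection_lineMap_sub_mem (σ := σ) (F := F) (G := G) (r := r) (s := s)
    (isHomogeneous_linearForm b)
  rw [hzero, map_zero, zero_sub, neg_mem_iff, pow_one, ← smul_eq_C_mul, ← map_smul] at hmem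
  obtain ⟨y, hy⟩ := exists_eq_mulVec_of_linearForm_mem hmem
  exact hσ.exists_eq_mulVec_of_smul_eq hrs hy

lemma exists_eq_vecMul_torsionMatrix_add_mulVec (h : IsLineCoprime σ F G)
    (hσ : CoprimeMinors σ) {α β γ : A} (hreg : IsRegularTriple α β γ)
    (hα : α ∈ complMinorsIdeal σ) (hβ : β ∈ complMinorsIdeal σ) (hγ : γ ∈ complMinorsIdeal σ)
    {a : Fin (d + 2) → A} {N : ℕ} (hN : 2 ≤ N)
    (ha : ∀ q : MvPolynomial (Fin (d + 2)) A, q.IsHomogeneous N →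
      q * linearForm a ∈ symmetricIdeal σ F G) :
    ∃ c y, a = c ᵥ* torsionMatrix σ F G + σ *ᵥ y := by
  obtain ⟨r, s, hrs⟩ := hσ.exists_ne_zero
  choose u hu using fun t => h.exists_forall_sub_mem hσ hN ha t
  obtain ⟨c, hc⟩ := hσ.exists_eq_vecMul_complMinors hreg hα hβ hγ
    (vecMul_eq_zero_of_forall_sub_mem h hrs fun t => hu t r s hrs)
  obtain ⟨y, hy⟩ := exists_eq_mulVec_of_forall_X_mul_mem h hσ hrs
    (b := a - c ᵥ* torsionMatrix σ F G) fun t => by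
      convert sub_mem (hu t r s hrs) (le_saturation _ _
        (X_mul_linearForm_vecMul_torsionMatrix_sub_mem σ F G c t)) using 1
      rw [map_sub, hc]
      ring
  exact ⟨c, y, by rw [← hy, add_sub_cancel]⟩

lemma exists_eq_mulVec_of_vecMul_torsionMatrix_eq (h : IsLineCoprime σ F G)
    (hσ : CoprimeMinors σ) {c : Fin (d + 2) → A} {y : Fin d → A}
    (hc : c ᵥ* torsionMatrix σ F G = σ *ᵥ y) : ∃ z, c = σ *ᵥ z := by
  obtain ⟨r, s, hrs⟩ := hσ.exists_ne_zero
  refine hσ.exists_eq_mulVec_of_vecMul_complMinors_eq_zero (funext fun t => ?_)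
  refine h.eq_zero_of_C_mul_socleForm_mem hrs ?_
  exact (Submodule.sub_mem_iff_right _ (Ideal.mul_mem_left _ _ (hc ▸ linearForm_mulVec_mem y))).1
    (X_mul_linearForm_vecMul_torsionMatrix_sub_mem σ F G c t)

end Torsion

section Dimension

lemma ringKrullDim_le_of_isIntegral (A B : Type*) [CommRing A] [CommRing B] [Algebra A B]
    [Algebra.IsIntegral A B] [FaithfulSMul A B] : ringKrullDim A ≤ ringKrullDim B := by
  refine iSup_le fun l => ?_
  obtain ⟨P, hprime, hover⟩ := (Ideal.nonempty_primesOver (S := B) l.head.asIdeal).some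
  obtain ⟨l', hl', -⟩ := Ideal.exists_ltSeries_of_hasGoingUp l P
  exact hl' ▸ le_iSup (fun q : LTSeries (PrimeSpectrum B) => (q.length : WithBot ℕ∞)) l'

lemma exists_natCast_eq_trdeg_le_ringKrullDim (k Q : Type*) [Field k] [CommRing Q] [IsDomain Q]
    [Algebra k Q] [Algebra.FiniteType k Q] :
    ∃ s : ℕ, Algebra.trdeg k Q = s ∧ (s : WithBot ℕ∞) ≤ ringKrullDim Q := by
  obtain ⟨s, g, hg, hint⟩ := exists_integral_inj_algHom_of_fg k Q
  algebraize [g.toRingHom]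
  have : Algebra.IsIntegral (MvPolynomial (Fin s) k) Q := ⟨hint⟩
  have : FaithfulSMul (MvPolynomial (Fin s) k) Q :=
    (faithfulSMul_iff_algebraMap_injective _ _).2 hg
  have : IsScalarTower k (MvPolynomial (Fin s) k) Q :=
    IsScalarTower.of_algebraMap_eq fun x => (g.commutes x).symm
  refine ⟨s, ?_, ?_⟩
  · have hadd := lift_trdeg_add_eq k (MvPolynomial (Fin s) k) Q
    simpa [MvPolynomial.trdeg_of_isDomain, trdeg_eq_zero, eq_comm] using hadd
  · calc (s : WithBot ℕ∞) = ringKrullDim (MvPolynomial (Fin s) k) := by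
          simp [MvPolynomial.ringKrullDim_of_isNoetherianRing]
      _ ≤ ringKrullDim Q := ringKrullDim_le_of_isIntegral _ _

lemma height_add_ringKrullDim_quotient_le {A : Type*} [CommRing A] (p : Ideal A) [p.IsPrime] :
    (p.height : WithBot ℕ∞) + ringKrullDim (A ⧸ p) ≤ ringKrullDim A := by
  let x : PrimeSpectrum A := ⟨p, inferInstance⟩
  have : Nonempty (PrimeSpectrum A) := ⟨x⟩
  have hquot : ringKrullDim (A ⧸ p) = (Order.coheight x : ℕ∞) := by
    rw [ringKrullDim_quotient, Order.coheight_eq_krullDim_Ici]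
    rfl
  have hheight : p.height = Order.height x := PrimeSpectrum.height_eq_orderHeight x
  rw [hquot, hheight, ringKrullDim, Order.krullDim_eq_iSup_height_add_coheight_of_nonempty,
    ← WithBot.coe_add, WithBot.coe_le_coe]
  exact le_iSup (fun y : PrimeSpectrum A => Order.height y + Order.coheight y) x

lemma exists_height_eq_trdeg_eq_add_le (k : Type*) {A : Type*} [Field k] [CommRing A]
    [Algebra k A] [Algebra.FiniteType k A] (p : Ideal A) [hp : p.IsPrime] {m : ℕ}
    (hm : ringKrullDim A ≤ m) :
    ∃ c s : ℕ, p.height = c ∧ Algebra.trdeg k (A ⧸ p) = s ∧ c + s ≤ m := by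
  have : IsNoetherianRing A := Algebra.FiniteType.isNoetherianRing k A
  obtain ⟨s, hs, hdim⟩ := exists_natCast_eq_trdeg_le_ringKrullDim k (A ⧸ p)
  obtain ⟨c, hc⟩ := ENat.ne_top_iff_exists.1 (Ideal.height_ne_top hp.ne_top)
  refine ⟨c, s, hc.symm, hs, ?_⟩
  have hsum : ((c + s : ℕ) : WithBot ℕ∞) ≤ (m : ℕ) := calc
    ((c + s : ℕ) : WithBot ℕ∞) = (p.height : WithBot ℕ∞) + s := by rw [← hc]; rfl
    _ ≤ (p.height : WithBot ℕ∞) + ringKrullDim (A ⧸ p) := by gcongr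
    _ ≤ m := (height_add_ringKrullDim_quotient_le p).trans hm
  exact_mod_cast hsum

open RingTheory.Sequence Module in
lemma supportDim_add_length_le_of_isWeaklyRegular {A M : Type*} [CommRing A] [AddCommGroup M]
    [Module A M] [Module.Finite A M] {rs : List A}
    (h : IsWeaklyRegular M rs) :
    supportDim A (M ⧸ Ideal.ofList rs • (⊤ : Submodule A M)) + rs.length ≤ supportDim A M := by
  induction rs generalizing M with
  | nil =>
    rw [Ideal.ofList_nil, Submodule.bot_smul]
    simpa using (supportDim_eq_of_equiv (Submodule.quotEquivOfEqBot ⊥ rfl)).le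
  | cons a rs ih =>
    obtain ⟨ha, hrs⟩ := (isWeaklyRegular_cons_iff M a rs).1 h
    calc supportDim A (M ⧸ Ideal.ofList (a :: rs) • (⊤ : Submodule A M)) + (a :: rs).length
        = supportDim A (QuotSMulTop a M ⧸ Ideal.ofList rs • (⊤ : Submodule A _)) + rs.length
            + 1 := by
          simp [supportDim_eq_of_equiv (Submodule.quotOfListConsSMulTopEquivQuotSMulTopInner M a _),
            add_assoc]
          rfl
      _ ≤ supportDim A (QuotSMulTop a M) + 1 := by gcongr; exact ih hrs
      _ ≤ supportDim A M := supportDim_quotSMulTop_succ_le_of_notMem_minimalPrimes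
          fun p hp => ha.notMem_of_mem_minimalPrimes hp

open RingTheory.Sequence Module in
lemma ringKrullDim_quotient_ofList_add_length_le {A : Type*} [CommRing A] {rs : List A}
    (h : IsWeaklyRegular A rs) :
    ringKrullDim (A ⧸ Ideal.ofList rs) + rs.length ≤ ringKrullDim A := by
  have htop : Ideal.ofList rs = Ideal.ofList rs • (⊤ : Ideal A) := by simp
  rw [ringKrullDim_eq_of_ringEquiv (Ideal.quotientEquivAlgOfEq A htop).toRingEquiv,
    ← supportDim_quotient_eq_ringKrullDim, ← supportDim_self_eq_ringKrullDim]
  exact supportDim_add_length_le_of_isWeaklyRegular h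

lemma ringKrullDim_quotient_span_pair_le {k : Type*} [Field k] {d : ℕ}
    {f g : MvPolynomial (Fin (d + 2)) k}
    (h : RingTheory.Sequence.IsRegular (MvPolynomial (Fin (d + 2)) k) [f, g]) :
    ringKrullDim (MvPolynomial (Fin (d + 2)) k ⧸ Ideal.span {f, g}) ≤ d := by
  have hle := ringKrullDim_quotient_ofList_add_length_le h.toIsWeaklyRegular
  have hspan : Ideal.ofList [f, g] = Ideal.span {f, g} := by
    simp [Ideal.ofList, Set.insert_def]
  rw [hspan, MvPolynomial.ringKrullDim_of_isNoetherianRing, ringKrullDim_eq_zero_of_field,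
    zero_add] at hle
  have hsum : ringKrullDim (MvPolynomial (Fin (d + 2)) k ⧸ Ideal.span {f, g}) + (2 : ℕ) ≤
      (d : WithBot ℕ∞) + (2 : ℕ) := by
    simpa using hle
  exact ENat.WithBot.add_le_add_natCast_right_iff.1 hsum

end Dimension

section GenericRank

open Module

lemma finrank_span_range_add_rank_le {K V n m : Type*} [Field K] [AddCommGroup V] [Module K V]
    [Fintype n] [Fintype m] {η : n → V} {M : Matrix n m K} (h : ∀ j, ∑ i, M i j • η i = 0) :
    finrank K (Submodule.span K (Set.range η)) + M.rank ≤ Fintype.card n := by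
  have hker : LinearMap.range M.mulVecLin ≤ LinearMap.ker (Fintype.linearCombination K η) := by
    rw [Matrix.range_mulVecLin, Submodule.span_le]
    rintro _ ⟨j, rfl⟩
    exact h j
  rw [← Fintype.range_linearCombination K η, ← finrank_fintype_fun_eq_card K,
    ← LinearMap.finrank_range_add_finrank_ker (Fintype.linearCombination K η)]
  exact Nat.add_le_add_left (Submodule.finrank_mono hker) _

variable {A : Type*} [CommRing A]

lemma linearIndependent_residueField_of_mem_minimalPrimes [IsNoetherianRing A] {n m : Type*}
    [Fintype m] {p : Ideal A} [p.IsPrime] (hp : p ∈ minimalPrimes A)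
    {φ : Matrix n m A} (hφ : Function.Injective φ.mulVecLin) :
    LinearIndependent p.ResidueField (φ.map (algebraMap A p.ResidueField)).col := by
  have hass : p ∈ associatedPrimes A A :=
    Module.associatedPrimes.minimalPrimes_annihilator_subset_associatedPrimes A A
      (by rwa [Module.annihilator_eq_bot.2 inferInstance])
  obtain ⟨-, r, hr⟩ := Submodule.isAssociatedPrime_iff.1
    (show (⊥ : Submodule A A).IsAssociatedPrime p from hass)
  have hmem (x : A) : x ∈ p ↔ x * r = 0 := by
    rw [hr, Submodule.mem_colon_singleton, smul_eq_mul, Submodule.mem_bot]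
  rw [← LinearIndependent.iff_fractionRing (R := A ⧸ p), Fintype.linearIndependent_iff]
  intro c hc
  choose b hb using fun j => Ideal.Quotient.mk_surjective (I := p) (c j)
  have hφb (i : n) : (φ.mulVec b) i ∈ p := by
    rw [← Ideal.algebraMap_residueField_eq_zero]
    simpa [Matrix.mulVec, dotProduct, Algebra.smul_def, ← hb, mul_comm] using congrFun hc i
  have hbr : r • b = 0 := hφ <| by
    ext i
    simpa [Matrix.mulVec_smul, mul_comm] using (hmem _).1 (hφb i)
  intro j
  rw [← hb j, Ideal.Quotient.eq_zero_iff_mem, hmem, mul_comm]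
  exact congrFun hbr j

lemma rank_span_range_le_card_of_span_localizedModule_eq_top {E V : Type*} [AddCommGroup E]
    [Module A E] [AddCommGroup V] [Module A V] (p : Ideal A) [p.IsPrime]
    [Module p.ResidueField V] [IsScalarTower A p.ResidueField V] (θ : E →ₗ[A] V)
    {s : Finset (LocalizedModule p.primeCompl E)}
    (hs : Submodule.span (Localization.AtPrime p) (s : Set (LocalizedModule p.primeCompl E)) = ⊤) :
    Module.rank p.ResidueField (Submodule.span p.ResidueField (Set.range θ)) ≤ s.card := by
  classical
  let K := p.ResidueField
  let := Module.compHom V (algebraMap (Localization.AtPrime p) K)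
  have : IsScalarTower (Localization.AtPrime p) K V := ⟨fun a b v => by
    rw [Algebra.smul_def, mul_smul]; rfl⟩
  have : IsScalarTower A (Localization.AtPrime p) V :=
    IsScalarTower.to₁₂₄ A (Localization.AtPrime p) K V
  have hunit (t : p.primeCompl) : IsUnit (algebraMap A (Module.End A V) t) := by
    have ht : algebraMap A K t ≠ 0 := mt Ideal.algebraMap_residueField_eq_zero.1 t.2
    simpa using (IsUnit.mk0 _ ht).map (Algebra.lsmul A A V : K →ₐ[A] Module.End A V)
  let Θ := (LocalizedModule.lift p.primeCompl θ hunit).extendScalarsOfIsLocalization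
    p.primeCompl (Localization.AtPrime p)
  have hΘ (x : E) : Θ (LocalizedModule.mkLinearMap p.primeCompl E x) = θ x :=
    LinearMap.congr_fun (LocalizedModule.lift_comp p.primeCompl θ hunit) x
  have hle : Submodule.span K (Set.range θ) ≤ Submodule.span K (s.image Θ : Set V) := by
    rw [Submodule.span_le]
    rintro _ ⟨x, rfl⟩
    have hx : Θ (LocalizedModule.mkLinearMap p.primeCompl E x) ∈
        Submodule.span (Localization.AtPrime p) (Θ '' s) := by
      rw [← Submodule.map_span, hs]
      exact Submodule.mem_map_of_mem Submodule.mem_top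
    rw [hΘ] at hx
    simpa using Submodule.span_subset_span _ K _ hx
  calc Module.rank K (Submodule.span K (Set.range θ))
      ≤ Module.rank K (Submodule.span K (s.image Θ : Set V)) := Submodule.rank_mono hle
    _ ≤ (s.image Θ).card := rank_span_finset_le _
    _ ≤ s.card := mod_cast Finset.card_image_le

/-- The condition `G_s` on a module `E` of rank `e`: for every prime `p` with
`1 ≤ dim A_p ≤ s - 1`, the localization `E_p` is generated by `dim A_p + e - 1` elements. -/
def SatisfiesG (A E : Type*) [CommRing A] [AddCommGroup E] [Module A E] (e s : ℕ) : Prop :=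
  ∀ (p : Ideal A) (_ : p.IsPrime) (c : ℕ),
    ringKrullDim (Localization.AtPrime p) = (c : WithBot ℕ∞) → 1 ≤ c → c ≤ s - 1 →
    ∃ t : Finset (LocalizedModule p.primeCompl E), t.card ≤ c + e - 1 ∧
      Submodule.span (Localization.AtPrime p) (t : Set (LocalizedModule p.primeCompl E)) = ⊤

variable {n m E V : Type*} [AddCommGroup E] [Module A E] [AddCommGroup V] [Module A V]

lemma exists_linearMap_apply_single_eq [Fintype n] [DecidableEq n] [Fintype m]
    {φ : Matrix n m A} {π : (n → A) →ₗ[A] E} (hφπ : Function.Exact φ.mulVecLin π)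
    (hπ : Function.Surjective π) {η : n → V} (hη : ∀ j, ∑ i, φ i j • η i = 0) :
    ∃ θ : E →ₗ[A] V, ∀ i, θ (π (Pi.single i 1)) = η i := by
  have hle : LinearMap.range φ.mulVecLin ≤ LinearMap.ker (Fintype.linearCombination A η) := by
    rw [Matrix.range_mulVecLin, Submodule.span_le]
    rintro _ ⟨j, rfl⟩
    exact hη j
  let e := hφπ.linearEquivOfSurjective hπ
  refine ⟨Submodule.liftQ _ _ hle ∘ₗ e.symm.toLinearMap, fun i => ?_⟩
  have he : e.symm (π (Pi.single i 1)) = Submodule.Quotient.mk (Pi.single i 1) := by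
    rw [LinearEquiv.symm_apply_eq]
    rfl
  simp [he]

lemma finrank_span_range_le_height_add [IsNoetherianRing A] {d e c : ℕ} {p : Ideal A}
    [p.IsPrime] [Module p.ResidueField V] [IsScalarTower A p.ResidueField V]
    {φ : Matrix (Fin (d + e)) (Fin d) A} {π : (Fin (d + e) → A) →ₗ[A] E}
    (hφ : Function.Injective φ.mulVecLin) (hφπ : Function.Exact φ.mulVecLin π)
    (hπ : Function.Surjective π) (hE : SatisfiesG A E e d) (hc : p.height = c)
    (hne : ∃ i j, φ i j ∉ p) {η : Fin (d + e) → V} (hη : ∀ j, ∑ i, φ i j • η i = 0) :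
    finrank p.ResidueField (Submodule.span p.ResidueField (Set.range η)) ≤ c + e := by
  have hrank := finrank_span_range_add_rank_le (η := η)
    (M := φ.map (algebraMap A p.ResidueField)) (by simpa using hη)
  rw [Fintype.card_fin] at hrank
  rcases Nat.eq_zero_or_pos c with rfl | hc0
  · have hcol := linearIndependent_residueField_of_mem_minimalPrimes
      (Ideal.height_eq_zero_iff.1 hc) hφ
    rw [← Matrix.rank_transpose, LinearIndependent.rank_matrix hcol, Fintype.card_fin] at hrank
    omega
  rcases le_or_gt c (d - 1) with hcd | hcd
  · obtain ⟨θ, hθ⟩ := exists_linearMap_apply_single_eq hφπ hπ hη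
    obtain ⟨t, ht, hspan⟩ := hE p inferInstance c
      (by rw [IsLocalization.AtPrime.ringKrullDim_eq_height p, hc]; rfl) hc0 hcd
    have hle : Submodule.span p.ResidueField (Set.range η) ≤
        Submodule.span p.ResidueField (Set.range θ) :=
      Submodule.span_mono (Set.range_subset_iff.2 fun i => ⟨_, hθ i⟩)
    have := finrank_le_of_rank_le <| (Submodule.rank_mono hle).trans
      (rank_span_range_le_card_of_span_localizedModule_eq_top p θ hspan)
    omega
  · obtain ⟨i, j, hij⟩ := hne
    have hpos : 0 < (φ.map (algebraMap A p.ResidueField)).rank := by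
      rw [Nat.pos_iff_ne_zero, Matrix.rank, Ne, Submodule.finrank_eq_zero, Matrix.range_mulVecLin,
        Submodule.span_eq_bot]
      exact fun h => hij (Ideal.algebraMap_residueField_eq_zero.1 (congrFun (h _ ⟨j, rfl⟩) i))
    omega

end GenericRank

section Transcendence

lemma exists_degreeOf_ne_zero {K ι : Type*} [Field K] {h : MvPolynomial ι K} (h0 : h ≠ 0)
    (hu : ¬IsUnit h) : ∃ i, h.degreeOf i ≠ 0 := by
  by_contra! hdeg
  have hC : h = C (coeff 0 h) := totalDegree_eq_zero_iff_eq_C.1 <|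
    (totalDegree_eq_zero_iff _ h).2 fun m hm i => by
      simpa [hdeg i] using monomial_le_degreeOf i hm
  rw [hC] at hu h0
  exact hu ((IsUnit.mk0 _ fun hc => h0 (by rw [hc, C_0])).map C)

lemma algebraicIndependent_mk_X {K ι : Type*} [CommRing K] [IsDomain K] {h : MvPolynomial ι K}
    {i : ι} (hi : h.degreeOf i ≠ 0) :
    AlgebraicIndependent K
      fun j : {j // j ≠ i} => Ideal.Quotient.mk (Ideal.span {h}) (X (j : ι)) := by
  classical
  rw [algebraicIndependent_iff]
  intro q hq
  have hmk : aeval (fun j : {j // j ≠ i} => Ideal.Quotient.mk (Ideal.span {h}) (X (j : ι))) q =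
      Ideal.Quotient.mkₐ K (Ideal.span {h}) (rename Subtype.val q) := by
    rw [← AlgHom.comp_apply]
    congr 1
    ext j
    simp
  rw [hmk, Ideal.Quotient.mkₐ_eq_mk, Ideal.Quotient.eq_zero_iff_mem,
    Ideal.mem_span_singleton] at hq
  obtain ⟨c, hc⟩ := hq
  by_contra hq0
  have hhc : h * c ≠ 0 := hc ▸ (rename_injective _ Subtype.val_injective).ne (a₂ := 0) hq0
  have hdeg := degreeOf_mul_eq (n := i) (left_ne_zero_of_mul hhc) (right_ne_zero_of_mul hhc)
  have hvars : i ∉ (rename Subtype.val q : MvPolynomial ι K).vars := fun hmem => by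
    simpa using vars_rename _ _ hmem
  rw [vars_def, Multiset.mem_toFinset, ← Multiset.count_eq_zero, ← degreeOf_def, hc] at hvars
  omega

lemma card_le_trdeg_quotient_span_singleton_add_one {K ι : Type} [Field K] [Fintype ι]
    {h : MvPolynomial ι K} (hh : Prime h) :
    (Fintype.card ι : Cardinal) ≤ Algebra.trdeg K (MvPolynomial ι K ⧸ Ideal.span {h}) + 1 := by
  classical
  obtain ⟨i, hi⟩ := exists_degreeOf_ne_zero hh.ne_zero hh.not_isUnit
  have : Nontrivial (MvPolynomial ι K ⧸ Ideal.span {h}) :=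
    Ideal.Quotient.nontrivial_iff.2 (mt Ideal.span_singleton_eq_top.1 hh.not_isUnit)
  calc (Fintype.card ι : Cardinal) = Cardinal.mk {j // j ≠ i} + 1 := by
        have := Fintype.card_pos_iff.2 ⟨i⟩
        simp [Fintype.card_subtype_compl]
        norm_cast
        omega
    _ ≤ _ := by gcongr; exact (algebraicIndependent_mk_X hi).cardinalMk_le_trdeg

open scoped IntermediateField.algebraAdjoinAdjoin in
lemma trdeg_le_rank_span {K L : Type*} [Field K] [Field L] [Algebra K L] {S : Set L}
    (hS : IntermediateField.adjoin K S = ⊤) :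
    Algebra.trdeg K L ≤ Module.rank K (Submodule.span K S) := by
  obtain ⟨b, -, hspan, hb⟩ := exists_linearIndependent K S
  have htop : IntermediateField.adjoin K b = ⊤ := by
    rw [eq_top_iff, ← hS, IntermediateField.adjoin_le_iff]
    calc S ⊆ Submodule.span K b := hspan ▸ Submodule.subset_span
      _ ⊆ Algebra.adjoin K b := Algebra.span_le_adjoin K b
      _ ⊆ IntermediateField.adjoin K b := IntermediateField.algebra_adjoin_le_adjoin K b
  have halg : Algebra.IsAlgebraic (Algebra.adjoin K b) L := ⟨fun x =>
    (Algebra.IsAlgebraic.isAlgebraic (R := Algebra.adjoin K b)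
      (⟨x, htop ▸ trivial⟩ : IntermediateField.adjoin K b)).algebraMap⟩
  rw [← hspan, rank_span_set hb]
  exact Algebra.IsAlgebraic.trdeg_le_cardinalMk K b

lemma trdeg_eq_of_isFractionRing.{u, v} (k : Type u) (A : Type v) {L : Type v} [Field k]
    [CommRing A] [IsDomain A] [Algebra k A] [Field L] [Algebra A L] [IsFractionRing A L]
    [Algebra k L] [IsScalarTower k A L] : Algebra.trdeg k L = Algebra.trdeg k A := by
  have : Algebra.IsAlgebraic A L := IsLocalization.isAlgebraic _ (nonZeroDivisors A)
  rw [← trdeg_add_eq k A, trdeg_eq_zero (R := A), add_zero]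

section FieldGeneratedBySolution

variable {k A E L : Type} [Field k] [CommRing A] [Algebra k A] [AddCommGroup E] [Module A E]
  [Field L] [Algebra k L] [Algebra A L]

lemma adjoin_residueField_eq_top {p : Ideal A} [p.IsPrime] [Algebra p.ResidueField L]
    [IsScalarTower k p.ResidueField L] [IsScalarTower A p.ResidueField L] {S : Set L}
    (hS : IntermediateField.adjoin k (Set.range (algebraMap A L) ∪ S) = ⊤) :
    IntermediateField.adjoin p.ResidueField S = ⊤ := by
  rw [← IntermediateField.restrictScalars_eq_top_iff (K := k), eq_top_iff, ← hS,
    IntermediateField.adjoin_le_iff]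
  rintro x (⟨a, rfl⟩ | hx) <;> rw [SetLike.mem_coe, IntermediateField.mem_restrictScalars]
  · rw [IsScalarTower.algebraMap_apply A p.ResidueField L]
    exact (IntermediateField.adjoin p.ResidueField S).algebraMap_mem _
  · exact IntermediateField.subset_adjoin p.ResidueField S hx

variable [Algebra.FiniteType k A] {d e : ℕ} {φ : Matrix (Fin (d + e)) (Fin d) A}
  {π : (Fin (d + e) → A) →ₗ[A] E} {η : Fin (d + e) → L}

/- With `c` the height of `p`, the residue field has transcendence degree at most `d - c`, and
`L` is generated over it by a space of dimension at most `c + e`. -/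
lemma trdeg_le_of_isScalarTower_residueField (hdim : ringKrullDim A ≤ d) (p : Ideal A)
    [p.IsPrime] [Algebra p.ResidueField L] [IsScalarTower k p.ResidueField L]
    [IsScalarTower A p.ResidueField L] (hφ : Function.Injective φ.mulVecLin)
    (hφπ : Function.Exact φ.mulVecLin π) (hπ : Function.Surjective π) (hE : SatisfiesG A E e d)
    (hne : ∃ i j, φ i j ∉ p) (hη : ∀ j, ∑ i, φ i j • η i = 0)
    (hgen : IntermediateField.adjoin k (Set.range (algebraMap A L) ∪ Set.range η) = ⊤) :
    Algebra.trdeg k L ≤ (d + e : ℕ) := by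
  have : IsNoetherianRing A := Algebra.FiniteType.isNoetherianRing k A
  obtain ⟨c, s, hc, hs, hcs⟩ := exists_height_eq_trdeg_eq_add_le k p hdim
  have hspan := finrank_span_range_le_height_add hφ hφπ hπ hE hc hne hη
  have : FiniteDimensional p.ResidueField (Submodule.span p.ResidueField (Set.range η)) :=
    FiniteDimensional.span_of_finite _ (Set.finite_range η)
  calc Algebra.trdeg k L
      = Algebra.trdeg k p.ResidueField + Algebra.trdeg p.ResidueField L :=
        (trdeg_add_eq k p.ResidueField).symm
    _ ≤ s + Module.finrank p.ResidueField (Submodule.span p.ResidueField (Set.range η)) := by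
        rw [trdeg_eq_of_isFractionRing k (A ⧸ p), hs, Module.finrank_eq_rank]
        gcongr
        exact trdeg_le_rank_span (adjoin_residueField_eq_top hgen)
    _ ≤ (d + e : ℕ) := mod_cast by omega

lemma trdeg_le_of_satisfiesG [IsScalarTower k A L] (hdim : ringKrullDim A ≤ d)
    (hφ : Function.Injective φ.mulVecLin) (hφπ : Function.Exact φ.mulVecLin π)
    (hπ : Function.Surjective π) (hE : SatisfiesG A E e d)
    (hne : ∃ i j, algebraMap A L (φ i j) ≠ 0) (hη : ∀ j, ∑ i, φ i j • η i = 0)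
    (hgen : IntermediateField.adjoin k (Set.range (algebraMap A L) ∪ Set.range η) = ⊤) :
    Algebra.trdeg k L ≤ (d + e : ℕ) := by
  have hp : (RingHom.ker (algebraMap A L)).IsPrime := RingHom.ker_isPrime _
  have hunit : (RingHom.ker (algebraMap A L)).primeCompl ≤
      (IsUnit.submonoid L).comap (algebraMap A L) := fun a ha => IsUnit.mk0 _ ha
  let := (Ideal.ResidueField.lift _ (algebraMap A L) le_rfl hunit).toAlgebra
  have : IsScalarTower A (RingHom.ker (algebraMap A L)).ResidueField L :=
    .of_algebraMap_eq fun a =>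
      (Ideal.ResidueField.lift_algebraMap _ (algebraMap A L) le_rfl hunit a).symm
  have : IsScalarTower k (RingHom.ker (algebraMap A L)).ResidueField L :=
    .to₁₃₄ k A _ L
  exact trdeg_le_of_isScalarTower_residueField hdim (RingHom.ker (algebraMap A L)) hφ hφπ hπ hE
    hne hη hgen

end FieldGeneratedBySolution

end Transcendence

section LineCoprime

lemma eq_of_prime_dvd_X {A ι : Type*} [CommRing A] [IsDomain A] {h : MvPolynomial ι A}
    (hh : Prime h) {i j : ι} (hi : h ∣ X i) (hj : h ∣ X j) : i = j :=
  X_dvd_X.1 <| (hh.irreducible.associated_of_dvd X_prime.irreducible hi).symm.dvd.trans hj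

lemma card_add_card_le_trdeg_quotient_span_singleton_add_one {K ι κ : Type} [Field K]
    [Fintype ι] [Fintype κ] {h : MvPolynomial ι (MvPolynomial κ K)} (hh : Prime h) :
    ((Fintype.card ι + Fintype.card κ : ℕ) : Cardinal) ≤
      Algebra.trdeg K (MvPolynomial ι (MvPolynomial κ K) ⧸ Ideal.span {h}) + 1 := by
  let Θ := sumAlgEquiv K ι κ
  have hΘ : Ideal.span {h} = (Ideal.span {Θ.symm h}).map (Θ : _ →+* _) := by
    rw [Ideal.map_span, Set.image_singleton]
    congr
    exact (Θ.apply_symm_apply h).symm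
  rw [← (Ideal.quotientEquivAlg _ _ Θ hΘ).trdeg_eq, ← Fintype.card_sum]
  exact card_le_trdeg_quotient_span_singleton_add_one ((MulEquiv.prime_iff Θ.symm).2 hh)

lemma eq_top_of_forall_C_mul_X_mem {K L A ι : Type*} [Field K] [Field L] [Algebra K L]
    [CommRing A] [Algebra K A] {M : IntermediateField K L} {θ : MvPolynomial ι A →ₐ[K] L}
    (hθ : ∀ z, ∃ p q, θ p / θ q = z) (hC : ∀ a, θ (C a) ∈ M) {c : A} (hc : θ (C c) ≠ 0)
    (hX : ∀ i, θ (C c) * θ (X i) ∈ M) : M = ⊤ := by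
  have hmem (p : MvPolynomial ι A) : θ p ∈ M := by
    induction p using MvPolynomial.induction_on with
    | C a => exact hC a
    | add p q hp hq => rw [map_add]; exact add_mem hp hq
    | mul_X p i hp =>
      rw [map_mul, ← mul_div_cancel_left₀ (θ (X i)) hc]
      exact mul_mem hp (div_mem (hX i) (hC c))
  rw [eq_top_iff]
  rintro z -
  obtain ⟨p, q, rfl⟩ := hθ z
  exact div_mem (hmem p) (hmem q)

variable {k : Type} [Field k] {d e : ℕ} {I : Ideal (MvPolynomial (Fin (d + 2)) k)}
  {E : Type} [AddCommGroup E] [Module (MvPolynomial (Fin (d + 2)) k ⧸ I) E]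
  {φ : Matrix (Fin (d + e)) (Fin d) (MvPolynomial (Fin (d + 2)) k ⧸ I)}
  {π : (Fin (d + e) → MvPolynomial (Fin (d + 2)) k ⧸ I) →ₗ[MvPolynomial (Fin (d + 2)) k ⧸ I] E}
  {ψ : Matrix (Fin (d + e)) (Fin d) (MvPolynomial (Fin (d + 2)) k)}

lemma trdeg_le_of_aeval_eq_zero {L : Type} [Field L] [Algebra k L]
    (hdim : ringKrullDim (MvPolynomial (Fin (d + 2)) k ⧸ I) ≤ d)
    (hφψ : ∀ i j, φ i j = Ideal.Quotient.mk I (ψ i j))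
    (hφ : Function.Injective φ.mulVecLin) (hφπ : Function.Exact φ.mulVecLin π)
    (hπ : Function.Surjective π)
    (hI1 : Ideal.span {r | ∃ i j, φ i j = r} =
      Ideal.span (Set.range fun t => Ideal.Quotient.mk I (X t)))
    (hE : SatisfiesG (MvPolynomial (Fin (d + 2)) k ⧸ I) E e d)
    {z : Fin (d + 2) → L} {η : Fin (d + e) → L} (hz : ∀ p ∈ I, aeval z p = 0) (hz0 : z ≠ 0)
    (hη : ∀ j, ∑ i, aeval z (ψ i j) * η i = 0)
    (hgen : IntermediateField.adjoin k (Set.range z ∪ Set.range η) = ⊤) :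
    Algebra.trdeg k L ≤ (d + e : ℕ) := by
  let lift : MvPolynomial (Fin (d + 2)) k ⧸ I →ₐ[k] L := Ideal.Quotient.liftₐ I (aeval z) hz
  let := lift.toAlgebra
  have : IsScalarTower k (MvPolynomial (Fin (d + 2)) k ⧸ I) L :=
    .of_algebraMap_eq fun a => (lift.commutes a).symm
  have hmk (p) : algebraMap (MvPolynomial (Fin (d + 2)) k ⧸ I) L (Ideal.Quotient.mk I p) =
      aeval z p := rfl
  refine trdeg_le_of_satisfiesG (η := η) hdim hφ hφπ hπ hE ?_ (fun j => ?_) ?_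
  · by_contra! hall
    refine hz0 (funext fun t => ?_)
    have hle : Ideal.span {r | ∃ i j, φ i j = r} ≤ RingHom.ker (algebraMap _ L) :=
      Ideal.span_le.2 <| by rintro _ ⟨i, j, rfl⟩; exact hall i j
    rw [hI1] at hle
    simpa [hmk] using hle (Ideal.subset_span ⟨t, rfl⟩)
  · simpa only [Algebra.smul_def, hφψ, hmk] using hη j
  · rw [eq_top_iff, ← hgen]
    refine IntermediateField.adjoin.mono _ _ _ (Set.union_subset_union_left _ ?_)
    rintro _ ⟨t, rfl⟩
    exact ⟨Ideal.Quotient.mk I (X t), by rw [hmk, aeval_X]⟩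

lemma aeval_algHom_lineMap_X {R L : Type*} [CommRing R] [CommRing L] [Algebra R L] {n : ℕ}
    (σ : Matrix (Fin (d + 2)) (Fin d) (MvPolynomial (Fin n) R)) (r s : Fin (d + 2))
    (θ : MvPolynomial (Fin 2) (MvPolynomial (Fin n) R) →ₐ[R] L)
    (p : MvPolynomial (Fin (d + 2)) R) :
    aeval (fun t => θ (lineMap σ r s (X t))) p = θ (lineMap σ r s (p.map C)) := by
  induction p using MvPolynomial.induction_on with
  | C a =>
    rw [aeval_C, map_C, ← algebraMap_eq (R := MvPolynomial (Fin n) R), AlgHom.commutes,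
      ← θ.commutes]
    rfl
  | add p q hp hq => simp only [map_add, hp, hq]
  | mul_X p t hp => simp only [map_mul, aeval_X, map_X, hp]

lemma lineMap_X_ne_zero {R L : Type*} [CommRing R] [CommRing L] [IsDomain L] [Algebra R L] {n : ℕ}
    {σ : Matrix (Fin (d + 2)) (Fin d) (MvPolynomial (Fin n) R)} {r s : Fin (d + 2)}
    {θ : MvPolynomial (Fin 2) (MvPolynomial (Fin n) R) →ₐ[R] L}
    (hrs : θ (C (complMinors σ r s)) ≠ 0) (hX : ∃ i, θ (X i) ≠ 0) :
    (fun t => θ (lineMap σ r s (X t))) ≠ 0 := by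
  obtain ⟨i, hi⟩ := hX
  intro h0
  have h := congrArg θ (lineMap_lineSection_X (σ := σ) (r := r) (s := s) i)
  rw [map_mul] at h
  refine mul_ne_zero hrs hi (h ▸ ?_)
  rw [lineSection, aeval_X]
  fin_cases i
  · exact congrFun h0 s
  · simpa using congrFun h0 r

lemma adjoin_lineMap_X_eq_top {L : Type*} [Field L] [Algebra k L] {n : ℕ}
    {σ : Matrix (Fin (d + 2)) (Fin d) (MvPolynomial (Fin n) k)} {r s : Fin (d + 2)}
    {θ : MvPolynomial (Fin 2) (MvPolynomial (Fin n) k) →ₐ[k] L}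
    (hθ : ∀ z, ∃ p q, θ p / θ q = z) (hrs : θ (C (complMinors σ r s)) ≠ 0) :
    IntermediateField.adjoin k (Set.range (fun t => θ (lineMap σ r s (X t))) ∪
      Set.range (fun i => θ (C (X i)))) = ⊤ := by
  refine eq_top_of_forall_C_mul_X_mem hθ (fun a => ?_) hrs fun i => ?_
  · induction a using MvPolynomial.induction_on with
    | C a =>
      have h : θ (C (C a)) = algebraMap k L a := θ.commutes a
      exact h ▸ IntermediateField.algebraMap_mem _ a
    | add p q hp hq => rw [map_add, map_add]; exact add_mem hp hq
    | mul_X p i hp =>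
      rw [map_mul, map_mul]
      exact mul_mem hp (IntermediateField.subset_adjoin _ _ (.inr ⟨i, rfl⟩))
  · have hmem (t) : θ (lineMap σ r s (X t)) ∈ IntermediateField.adjoin k
        (Set.range (fun t => θ (lineMap σ r s (X t))) ∪ Set.range (fun i => θ (C (X i)))) :=
      IntermediateField.subset_adjoin _ _ (.inl ⟨t, rfl⟩)
    rw [← map_mul, ← lineMap_lineSection_X, lineSection, aeval_X]
    fin_cases i
    · exact hmem s
    · simpa using hmem r

lemma trdeg_le_of_lineMap {L : Type} [Field L] [Algebra k L]
    {F G : Matrix (Fin (d + 2)) (Fin (d + 2)) k}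
    (hI : I = Ideal.span {quadForm F, quadForm G})
    (hdim : ringKrullDim (MvPolynomial (Fin (d + 2)) k ⧸ I) ≤ d)
    (hφψ : ∀ i j, φ i j = Ideal.Quotient.mk I (ψ i j))
    (hφ : Function.Injective φ.mulVecLin) (hφπ : Function.Exact φ.mulVecLin π)
    (hπ : Function.Surjective π)
    (hI1 : Ideal.span {r | ∃ i j, φ i j = r} =
      Ideal.span (Set.range fun t => Ideal.Quotient.mk I (X t)))
    (hE : SatisfiesG (MvPolynomial (Fin (d + 2)) k ⧸ I) E e d)
    {σ : Matrix (Fin (d + 2)) (Fin d) (MvPolynomial (Fin (d + e)) k)}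
    (hσ : ∀ j, linearForm (σᵀ j) = ∑ i, (ψ i j).map C * C (X i)) {r s : Fin (d + 2)}
    {θ : MvPolynomial (Fin 2) (MvPolynomial (Fin (d + e)) k) →ₐ[k] L}
    (hθ : ∀ z, ∃ p q, θ p / θ q = z) (hrs : θ (C (complMinors σ r s)) ≠ 0)
    (hX : ∃ i, θ (X i) ≠ 0) (hF : θ (lineMap σ r s (quadForm (F.map C))) = 0)
    (hG : θ (lineMap σ r s (quadForm (G.map C))) = 0) :
    Algebra.trdeg k L ≤ (d + e : ℕ) := by
  refine trdeg_le_of_aeval_eq_zero hdim hφψ hφ hφπ hπ hI1 hE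
    (z := fun t => θ (lineMap σ r s (X t))) (η := fun i => θ (C (X i))) ?_
    (lineMap_X_ne_zero hrs hX) (fun j => ?_)
    (adjoin_lineMap_X_eq_top hθ hrs)
  · suffices h : I ≤ RingHom.ker (aeval fun t => θ (lineMap σ r s (X t))) from fun p hp => h hp
    rw [hI, Ideal.span_le, Set.pair_subset_iff]
    simp only [SetLike.mem_coe, RingHom.mem_ker, aeval_algHom_lineMap_X, map_quadForm]
    exact ⟨hF, hG⟩
  · have h := congrArg (fun p => θ (lineMap σ r s p)) (hσ j)
    simpa [lineMap_linearForm_transpose, aeval_algHom_lineMap_X] using h.symm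

lemma isLineCoprime_of_satisfiesG {F G : Matrix (Fin (d + 2)) (Fin (d + 2)) k}
    (hI : I = Ideal.span {quadForm F, quadForm G})
    (hdim : ringKrullDim (MvPolynomial (Fin (d + 2)) k ⧸ I) ≤ d)
    (hφψ : ∀ i j, φ i j = Ideal.Quotient.mk I (ψ i j))
    (hφ : Function.Injective φ.mulVecLin) (hφπ : Function.Exact φ.mulVecLin π)
    (hπ : Function.Surjective π)
    (hI1 : Ideal.span {r | ∃ i j, φ i j = r} =
      Ideal.span (Set.range fun t => Ideal.Quotient.mk I (X t)))
    (hE : SatisfiesG (MvPolynomial (Fin (d + 2)) k ⧸ I) E e d)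
    {σ : Matrix (Fin (d + 2)) (Fin d) (MvPolynomial (Fin (d + e)) k)}
    (hσ : ∀ j, linearForm (σᵀ j) = ∑ i, (ψ i j).map C * C (X i)) :
    IsLineCoprime σ (F.map C) (G.map C) := by
  rintro r s - h hh hhF hhG
  by_contra hrs
  have : (Ideal.span {h}).IsPrime := (Ideal.span_singleton_prime hh.ne_zero).2 hh
  let D := MvPolynomial (Fin 2) (MvPolynomial (Fin (d + e)) k) ⧸ Ideal.span {h}
  let θ : MvPolynomial (Fin 2) (MvPolynomial (Fin (d + e)) k) →ₐ[k] FractionRing D :=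
    (IsScalarTower.toAlgHom k D (FractionRing D)).comp (Ideal.Quotient.mkₐ k (Ideal.span {h}))
  have hθ0 (p) : θ p = 0 ↔ h ∣ p := by
    rw [← Ideal.mem_span_singleton, ← Ideal.Quotient.eq_zero_iff_mem]
    exact map_eq_zero_iff _ (IsFractionRing.injective D (FractionRing D))
  have hθ (z) : ∃ p q, θ p / θ q = z := by
    obtain ⟨x, y, -, rfl⟩ := IsFractionRing.div_surjective (A := D) z
    obtain ⟨p, rfl⟩ := Ideal.Quotient.mk_surjective x
    obtain ⟨q, rfl⟩ := Ideal.Quotient.mk_surjective y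
    exact ⟨p, q, rfl⟩
  have hX : ∃ i, θ (X i) ≠ 0 := by
    by_contra! hX
    exact Fin.zero_ne_one (eq_of_prime_dvd_X hh ((hθ0 _).1 (hX 0)) ((hθ0 _).1 (hX 1)))
  have hlow := card_add_card_le_trdeg_quotient_span_singleton_add_one hh
  have hup : Algebra.trdeg k (FractionRing D) ≤ (d + e : ℕ) :=
    trdeg_le_of_lineMap hI hdim hφψ hφ hφπ hπ hI1 hE hσ hθ (mt (hθ0 _).1 hrs) hX
      ((hθ0 _).2 hhF) ((hθ0 _).2 hhG)
  rw [trdeg_eq_of_isFractionRing k D] at hup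
  have := hlow.trans (add_le_add_left hup 1)
  rw [Fintype.card_fin, Fintype.card_fin] at this
  exact absurd this (mod_cast (by omega))

end LineCoprime

section Homogeneity

lemma isWeightedHomogeneous_map {ι κ R S M N : Type*} [CommSemiring R] [CommSemiring S]
    [AddCommMonoid M] [AddCommMonoid N] (φ : M →+ N) {w : ι → M} {v : κ → N}
    (f : MvPolynomial ι R →+* MvPolynomial κ S) (hC : ∀ r, (f (C r)).IsWeightedHomogeneous v 0)
    (hX : ∀ i, (f (X i)).IsWeightedHomogeneous v (φ (w i))) {p : MvPolynomial ι R} {m : M}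
    (hp : p.IsWeightedHomogeneous w m) : (f p).IsWeightedHomogeneous v (φ m) := by
  rw [p.as_sum, map_sum]
  refine IsWeightedHomogeneous.sum _ _ _ fun a ha => ?_
  rw [monomial_eq, map_mul, Finsupp.prod, map_prod, ← hp (mem_support_iff.1 ha),
    Finsupp.weight_apply, Finsupp.sum, map_sum, ← zero_add (∑ i ∈ _, _)]
  refine (hC _).mul (IsWeightedHomogeneous.prod _ _ _ fun i _ => ?_)
  rw [map_pow, map_nsmul]
  exact (hX i).pow _

lemma isWeightedHomogeneous_rename_of_isHomogeneous {ι κ R N : Type*} [CommSemiring R]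
    [AddCommMonoid N] {w : κ → N} {β : N} {f : ι → κ} (hw : ∀ i, w (f i) = β)
    {p : MvPolynomial ι R} {m : ℕ} (hp : p.IsHomogeneous m) :
    (rename f p).IsWeightedHomogeneous w (m • β) := by
  refine isWeightedHomogeneous_map (multiplesHom N β) (rename f).toRingHom (fun r => ?_)
    (fun i => ?_) hp
  · simpa using isWeightedHomogeneous_C w r
  · simpa [hw] using isWeightedHomogeneous_X R w (f i)

variable {ι A n : Type*} [CommRing A] [Fintype n]

lemma isHomogeneous_det [DecidableEq n] {M : Matrix n n (MvPolynomial ι A)} {r : n → ℕ}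
    (hM : ∀ i j, (M i j).IsHomogeneous (r i)) : M.det.IsHomogeneous (∑ i, r i) := by
  rw [← det_transpose, det_apply]
  refine IsHomogeneous.sum _ _ _ fun τ _ => (homogeneousSubmodule ι A _).smul_of_tower_mem _ ?_
  exact IsHomogeneous.prod _ _ _ fun i _ => hM i (τ i)

lemma isHomogeneous_mul_apply {l m : Type*} {M : Matrix l n (MvPolynomial ι A)}
    {N : Matrix n m (MvPolynomial ι A)} {a b : ℕ} (hM : ∀ i j, (M i j).IsHomogeneous a)
    (hN : ∀ i j, (N i j).IsHomogeneous b) (i : l) (j : m) :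
    ((M * N) i j).IsHomogeneous (a + b) :=
  IsHomogeneous.sum _ _ _ fun t _ => (hM i t).mul (hN t j)

variable {d : ℕ} {σ : Matrix (Fin (d + 2)) (Fin d) (MvPolynomial ι A)}

lemma isHomogeneous_complMinors (hσ : ∀ t j, (σ t j).IsHomogeneous 1) (a b : Fin (d + 2)) :
    (complMinors σ a b).IsHomogeneous d := by
  have unit (c t : Fin (d + 2)) :
      ((Pi.single c 1 : Fin (d + 2) → MvPolynomial ι A) t).IsHomogeneous 0 := by
    rw [Pi.single_apply]
    split_ifs
    exacts [isHomogeneous_one _ _, isHomogeneous_zero _ _ _]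
  have h := isHomogeneous_det (M := bordered σ (Pi.single a 1) (Pi.single b 1))
    (r := vecCons 0 (vecCons 0 fun _ => 1))
    (Fin.cases (unit a) (Fin.cases (unit b) fun j t => hσ t j))
  have hsum : ∑ i, (vecCons 0 (vecCons 0 fun _ => 1) : Fin (d + 2) → ℕ) i = d := by
    simp [Fin.sum_univ_succ]
  rwa [hsum] at h

lemma isHomogeneous_torsionMatrix (hσ : ∀ t j, (σ t j).IsHomogeneous 1)
    (F G : Matrix (Fin (d + 2)) (Fin (d + 2)) A) (i t : Fin (d + 2)) :
    (torsionMatrix σ (F.map C) (G.map C) i t).IsHomogeneous (2 * d) := by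
  have hW := isHomogeneous_complMinors hσ
  have hC (H : Matrix (Fin (d + 2)) (Fin (d + 2)) A) (a b : Fin (d + 2)) :
      ((H.map C : Matrix _ _ (MvPolynomial ι A)) a b).IsHomogeneous 0 := isHomogeneous_C _ _
  have hGF (H K : Matrix (Fin (d + 2)) (Fin (d + 2)) A) :=
    isHomogeneous_mul_apply (isHomogeneous_mul_apply (hC H) hW) (hC K)
  have h := isHomogeneous_mul_apply hW (fun a b => (hGF G F a b).sub (hGF F G a b)) i t
  rwa [zero_add, add_zero, ← two_mul] at h

lemma exists_quadForm_eq [Fintype ι] {p : MvPolynomial ι A} (hp : p.IsHomogeneous 2) :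
    ∃ F, quadForm F = p := by
  rw [← mem_homogeneousSubmodule, ← homogeneousSubmodule_one_pow, pow_two] at hp
  induction hp using Submodule.mul_induction_on' with
  | mem_mul_mem p hp q hq =>
    obtain ⟨a, rfl⟩ := exists_linearForm_eq hp
    obtain ⟨b, rfl⟩ := exists_linearForm_eq hq
    refine ⟨vecMulVec a b, ?_⟩
    rw [quadForm, linearForm, Fintype.linearCombination_apply, Finset.sum_mul]
    refine Finset.sum_congr rfl fun i _ => ?_
    change X i * linearForm (a i • b) = _
    rw [map_smul, mul_smul_comm, smul_mul_assoc]
    rfl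
  | add p _ q _ hp hq =>
    obtain ⟨F, rfl⟩ := hp
    obtain ⟨G, rfl⟩ := hq
    refine ⟨F + G, ?_⟩
    change ∑ i, X i * linearForm (F i + G i) = _
    simp only [map_add, mul_add, Finset.sum_add_distrib, quadForm]

end Homogeneity

section MinimalGenerators

variable {K R Q : Type*} [Field K] [CommRing R] [AddCommGroup Q] [Module R Q]

lemma card_le_card_of_span_range_eq (ε : R →+* K) {ι κ : Type*} [Fintype ι] [Fintype κ]
    {v : ι → Q} (hv : ∀ c : ι → R, ∑ i, c i • v i = 0 → ∀ i, ε (c i) = 0) {w : κ → Q}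
    (hw : Submodule.span R (Set.range w) = Submodule.span R (Set.range v)) :
    Fintype.card ι ≤ Fintype.card κ := by
  classical
  have hvw (i : ι) : ∃ c : κ → R, ∑ j, c j • w j = v i :=
    (Submodule.mem_span_range_iff_exists_fun R).1 (hw ▸ Submodule.subset_span ⟨i, rfl⟩)
  have hwv (j : κ) : ∃ c : ι → R, ∑ i, c i • v i = w j :=
    (Submodule.mem_span_range_iff_exists_fun R).1 (hw ▸ Submodule.subset_span ⟨j, rfl⟩)
  choose P hP using hvw
  choose U hU using hwv
  have hPU (i : ι) : ∑ i', (of P * of U) i i' • v i' = v i := by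
    simp only [mul_apply, of_apply, Finset.sum_smul, mul_smul]
    rw [Finset.sum_comm]
    simp only [← Finset.smul_sum, hU, hP]
  have hone : (of P).map ε * (of U).map ε = 1 := by
    rw [← Matrix.map_mul, ← Matrix.map_one ε (map_zero ε) (map_one ε)]
    ext i i'
    refine sub_eq_zero.1 ?_
    simp only [map_apply, ← map_sub]
    refine hv (fun i' => (of P * of U) i i' - (1 : Matrix ι ι R) i i') ?_ i'
    simp [sub_smul, hPU, one_apply]
  calc Fintype.card ι = ((of P).map ε * (of U).map ε).rank := by rw [hone, rank_one]
    _ ≤ ((of P).map ε).rank := rank_mul_le_left _ _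
    _ ≤ Fintype.card κ := rank_le_card_width _

end MinimalGenerators

section PolynomialsOverT

variable {k : Type} [Field k] {m n : ℕ}

variable (k m n) in
/-- The identification of `B` with the polynomial ring in the `x`-variables over `T`. -/
def overT : B k m n ≃ₐ[T k n] MvPolynomial (Fin m) (T k n) :=
  AlgEquiv.ofRingEquiv (f := (sumAlgEquiv k (Fin m) (Fin n)).toRingEquiv) fun p =>
    DFunLike.congr_fun (sumAlgEquiv_comp_rename_inr (R := k) (S₁ := Fin m) (S₂ := Fin n)) p

lemma overT_X_inl (t : Fin m) : overT k m n (X (.inl t)) = X t := sumAlgEquiv_X_inl ..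

lemma overT_X_inr (j : Fin n) : overT k m n (X (.inr j)) = C (X j) := sumAlgEquiv_X_inr ..

lemma overT_rename_inr (p : T k n) : overT k m n (rename .inr p) = C p := (overT k m n).commutes p

lemma overT_rename_inl (p : MvPolynomial (Fin m) k) :
    overT k m n (rename .inl p) = p.map C :=
  DFunLike.congr_fun (sumAlgEquiv_comp_rename_inl (R := k) (S₁ := Fin m) (S₂ := Fin n)) p

lemma overT_symm_linearForm (a : Fin m → T k n) :
    (overT k m n).symm (linearForm a) = ∑ t, rename .inr (a t) * X (.inl t) := by
  rw [AlgEquiv.symm_apply_eq, map_sum]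
  simp only [map_mul, overT_rename_inr, overT_X_inl, linearForm, Fintype.linearCombination_apply,
    smul_eq_C_mul]

lemma overT_sum_X_mul_rename_inr (a : Fin m → T k n) :
    overT k m n (∑ t, X (.inl t) * rename .inr (a t)) = linearForm a := by
  simp only [← (overT k m n).eq_symm_apply, overT_symm_linearForm, mul_comm]

lemma overT_sum_rename_inl_mul_X (b : Fin n → MvPolynomial (Fin m) k) :
    overT k m n (∑ i, rename .inl (b i) * X (.inr i)) = ∑ i, (b i).map C * C (X i) := by
  simp only [map_sum, map_mul, overT_rename_inl, overT_X_inr]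

lemma isHomogeneous_overT {p : B k m n} {N : ℕ} (hp : p.IsWeightedHomogeneous (wx m n) N) :
    (overT k m n p).IsHomogeneous N := by
  refine isWeightedHomogeneous_map (AddMonoidHom.id ℕ) (overT k m n).toRingEquiv.toRingHom
    (fun c => ?_) ?_ hp
  · rw [← rename_C Sum.inr c]
    exact (overT_rename_inr (C c)).symm ▸ isHomogeneous_C _ _
  · rintro (t | j)
    · exact (overT_X_inl (k := k) (n := n) t).symm ▸ isHomogeneous_X _ _
    · exact (overT_X_inr (k := k) (m := m) j).symm ▸ isHomogeneous_C _ _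

lemma map_overT_mxB : (mxB k m n).map (overT k m n) = idealOfVars (Fin m) (T k n) := by
  rw [mxB, Ideal.map_span, ← Set.range_comp, idealOfVars]
  exact congrArg (Ideal.span <| Set.range ·) (funext overT_X_inl)

variable {L : Ideal (B k m n)}

lemma mk_mem_H0_iff {p : B k m n} :
    Ideal.Quotient.mk L p ∈ H0 k m n L ↔ ∃ N, ∀ q ∈ mxB k m n ^ N, q * p ∈ L := by
  have mono : Monotone fun N => Submodule.torsionBySet (B k m n) (B k m n ⧸ L)
      ((mxB k m n ^ N : Ideal (B k m n)) : Set (B k m n)) := fun N M hNM =>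
    Submodule.torsionBySet_le_torsionBySet_of_subset (Ideal.pow_le_pow_right hNM)
  simp only [H0, Submodule.mem_iSup_of_directed _ mono.directed_le, Submodule.mem_torsionBySet_iff,
    Subtype.forall, SetLike.mem_coe]
  exact exists_congr fun N => forall₂_congr fun q _ => Ideal.Quotient.eq_zero_iff_mem

variable (L) in
/-- The `T`-linear map `T^m → B/L` sending a coefficient vector to the class of the linear form in
the `x`-variables; its range is the strand of `x`-degree one. -/
def linearStrand : (Fin m → T k n) →ₗ[T k n] B k m n ⧸ L :=
  (Ideal.Quotient.mkₐ (T k n) L).toLinearMap ∘ₗ (overT k m n).symm.toLinearMap ∘ₗ linearForm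

lemma range_linearStrand : LinearMap.range (linearStrand L) = SxDeg k m n L 1 := by
  apply le_antisymm
  · rintro _ ⟨a, rfl⟩
    have h : linearStrand L a = ∑ t, a t • Ideal.Quotient.mk L (X (.inl t)) := by
      change Ideal.Quotient.mk L ((overT k m n).symm _) = _
      rw [overT_symm_linearForm, map_sum]
      rfl
    rw [h]
    refine Submodule.sum_mem _ fun t _ => Submodule.smul_mem _ _ (Submodule.subset_span ?_)
    exact ⟨_, isWeightedHomogeneous_X k (wx m n) (.inl t), rfl⟩
  · refine Submodule.span_le.2 ?_
    rintro _ ⟨p, hp, rfl⟩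
    obtain ⟨a, ha⟩ := exists_linearForm_eq (isHomogeneous_overT hp)
    exact ⟨a, congrArg (Ideal.Quotient.mk L) ((AlgEquiv.symm_apply_eq _).2 ha)⟩

end PolynomialsOverT

section LinearStrand

variable {k : Type} [Field k] {d n : ℕ} {σ : Matrix (Fin (d + 2)) (Fin d) (T k n)}
  {F G : Matrix (Fin (d + 2)) (Fin (d + 2)) (T k n)} {L : Ideal (B k (d + 2) n)}

lemma linearStrand_eq_zero_iff (hL : L = (symmetricIdeal σ F G).comap (overT k (d + 2) n))
    {a : Fin (d + 2) → T k n} : linearStrand L a = 0 ↔ ∃ y, a = σ *ᵥ y := by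
  have h : linearStrand L a = 0 ↔ linearForm a ∈ symmetricIdeal σ F G := by
    refine Ideal.Quotient.eq_zero_iff_mem.trans ?_
    rw [hL, Ideal.mem_comap]
    exact iff_of_eq (congrArg (· ∈ _) ((overT k (d + 2) n).apply_symm_apply _))
  exact h.trans ⟨exists_eq_mulVec_of_linearForm_mem, by
    rintro ⟨y, rfl⟩; exact linearForm_mulVec_mem y⟩

lemma linearStrand_mem_H0_iff (hL : L = (symmetricIdeal σ F G).comap (overT k (d + 2) n))
    {a : Fin (d + 2) → T k n} : linearStrand L a ∈ H0 k (d + 2) n L ↔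
      ∃ N, ∀ q ∈ idealOfVars (Fin (d + 2)) (T k n) ^ N,
        q * linearForm a ∈ symmetricIdeal σ F G := by
  have key (p : B k (d + 2) n) : p * (overT k (d + 2) n).symm (linearForm a) ∈ L ↔
      overT k (d + 2) n p * linearForm a ∈ symmetricIdeal σ F G := by
    rw [hL, Ideal.mem_comap, map_mul, AlgEquiv.apply_symm_apply]
  refine mk_mem_H0_iff.trans (exists_congr fun N => ?_)
  simp only [← map_overT_mxB, ← Ideal.map_pow,
    Ideal.mem_map_iff_of_surjective _ (overT k (d + 2) n).surjective]
  refine ⟨?_, fun h p hp => (key p).2 (h _ ⟨p, hp, rfl⟩)⟩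
  rintro h _ ⟨p, hp, rfl⟩
  exact (key p).1 (h p hp)

lemma span_eq_comap_symmetricIdeal {f g : MvPolynomial (Fin (d + 2)) k}
    {F G : Matrix (Fin (d + 2)) (Fin (d + 2)) k} (hF : quadForm F = f) (hG : quadForm G = g)
    {ℓ : Fin d → B k (d + 2) n} (hℓ : ∀ j, overT k (d + 2) n (ℓ j) = linearForm (σᵀ j)) :
    Ideal.span (Set.range ℓ ∪ {rename .inl f, rename .inl g}) =
      (symmetricIdeal σ (F.map C) (G.map C)).comap (overT k (d + 2) n) := by
  rw [← Ideal.comap_map_of_bijective _ (overT k (d + 2) n).bijective (I := Ideal.span _),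
    Ideal.map_span, Set.image_union, Set.image_pair, ← Set.range_comp, overT_rename_inl,
    overT_rename_inl, ← hF, ← hG, map_quadForm, map_quadForm,
    show overT k (d + 2) n ∘ ℓ = _ from funext hℓ]
  rfl

lemma isWeightedHomogeneous_overT_symm_torsionMatrix
    (hσ : ∀ t j, (σ t j).IsHomogeneous 1)
    (F G : Matrix (Fin (d + 2)) (Fin (d + 2)) k) (i : Fin (d + 2)) :
    ((overT k (d + 2) n).symm (linearForm
      (torsionMatrix σ (F.map C) (G.map C) i))).IsWeightedHomogeneous (bwt (d + 2) n)
        (1, 2 * d) := by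
  rw [overT_symm_linearForm]
  refine IsWeightedHomogeneous.sum _ _ _ fun t _ => ?_
  have hcoeff := isWeightedHomogeneous_rename_of_isHomogeneous (w := bwt (d + 2) n) (β := (0, 1))
    (f := Sum.inr) (fun _ => rfl) (isHomogeneous_torsionMatrix hσ F G i t)
  have h := hcoeff.mul (isWeightedHomogeneous_X k (bwt (d + 2) n) (.inl t))
  have hdeg : (2 * d) • ((0, 1) : ℕ × ℕ) + bwt (d + 2) n (.inl t) = (1, 2 * d) := by simp [bwt]
  rwa [hdeg] at h

lemma AcompZ_one_eq_span (hL : L = (symmetricIdeal σ F G).comap (overT k (d + 2) n))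
    (h : IsLineCoprime σ F G) (hσ : CoprimeMinors σ) {α β γ : T k n}
    (hreg : IsRegularTriple α β γ) (hα : α ∈ complMinorsIdeal σ) (hβ : β ∈ complMinorsIdeal σ)
    (hγ : γ ∈ complMinorsIdeal σ) :
    AcompZ k (d + 2) n L 1 =
      Submodule.span (T k n) (Set.range fun i => linearStrand L (torsionMatrix σ F G i)) := by
  have strand : AcompZ k (d + 2) n L 1 =
      (H0 k (d + 2) n L).restrictScalars (T k n) ⊓ LinearMap.range (linearStrand L) := by
    rw [range_linearStrand]
    rfl
  rw [strand]
  apply le_antisymm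
  · rintro _ ⟨hz, a, rfl⟩
    obtain ⟨N, hN⟩ := (linearStrand_mem_H0_iff hL).1 hz
    obtain ⟨c, y, rfl⟩ := exists_eq_vecMul_torsionMatrix_add_mulVec h hσ hreg hα hβ hγ
      (le_max_right N 2) fun q hq => hN q <| (mem_pow_idealOfVars_iff N q).2 fun m hm => by
        rw [Finsupp.degree_eq_weight_one]
        exact (le_max_left N 2).trans_eq (hq (mem_support_iff.1 hm)).symm
    rw [map_add, (linearStrand_eq_zero_iff hL).2 ⟨y, rfl⟩, add_zero]
    have hc : c ᵥ* torsionMatrix σ F G = ∑ i, c i • torsionMatrix σ F G i := vecMul_eq_sum _ _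
    rw [hc, map_sum]
    simp only [map_smul]
    exact Submodule.sum_mem _ fun i _ =>
      Submodule.smul_mem _ _ (Submodule.subset_span ⟨i, rfl⟩)
  · refine Submodule.span_le.2 ?_
    rintro _ ⟨i, rfl⟩
    refine ⟨(linearStrand_mem_H0_iff hL).2 ⟨2, fun q hq => ?_⟩, _, rfl⟩
    suffices idealOfVars (Fin (d + 2)) (T k n) ^ 2 ≤
        (symmetricIdeal σ F G).colon {linearForm (torsionMatrix σ F G i)} from
      Submodule.mem_colon_singleton.1 (this hq)
    rw [pow_two, idealOfVars, Ideal.span_mul_span', Ideal.span_le]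
    rintro _ ⟨_, ⟨s, rfl⟩, _, ⟨t, rfl⟩, rfl⟩
    refine Submodule.mem_colon_singleton.2 ?_
    rw [smul_eq_mul, mul_assoc]
    exact X_mul_X_mul_linearForm_torsionMatrix_mem σ F G i s t

lemma card_le_of_span_eq_span_torsionMatrix
    (hL : L = (symmetricIdeal σ F G).comap (overT k (d + 2) n)) (h : IsLineCoprime σ F G)
    (hσ : CoprimeMinors σ) (hσlin : ∀ t j, (σ t j).IsHomogeneous 1)
    {s : Finset (B k (d + 2) n ⧸ L)} (hs : Submodule.span (T k n) (s : Set (B k (d + 2) n ⧸ L)) =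
      Submodule.span (T k n) (Set.range fun i => linearStrand L (torsionMatrix σ F G i))) :
    d + 2 ≤ s.card := by
  have hcard := card_le_card_of_span_range_eq (constantCoeff : T k n →+* k)
    (v := fun i => linearStrand L (torsionMatrix σ F G i)) (w := ((↑) : s → _)) ?_
    (by rwa [Subtype.range_coe])
  · simpa using hcard
  intro c hc i
  have hrel : linearStrand L (c ᵥ* torsionMatrix σ F G) = 0 := by
    rw [← hc, vecMul_eq_sum, map_sum]
    exact Finset.sum_congr rfl fun i _ => map_smul _ _ _
  obtain ⟨y, hy⟩ := (linearStrand_eq_zero_iff hL).1 hrel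
  obtain ⟨z, rfl⟩ := exists_eq_mulVec_of_vecMul_torsionMatrix_eq h hσ hy
  have hconst (j : Fin d) : constantCoeff (σ i j) = 0 :=
    (hσlin i j).coeff_eq_zero (by simp)
  simp [mulVec, dotProduct, hconst]

end LinearStrand

theorem ci_A1_generators
    (d e : ℕ) (hd : 2 ≤ d)
    -- `f, g`: a homogeneous `S`-regular sequence of quadrics in `S = k[x_1,…,x_{d+2}]`
    (f g : MvPolynomial (Fin (d + 2)) k)
    (hf : f ∈ homogeneousSubmodule (Fin (d + 2)) k 2)
    (hg : g ∈ homogeneousSubmodule (Fin (d + 2)) k 2)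
    (hfg : RingTheory.Sequence.IsRegular (MvPolynomial (Fin (d + 2)) k) [f, g])
    -- `E`: a module over `R = S/(f,g)`
    (E : Type) [AddCommGroup E]
    [Module (MvPolynomial (Fin (d + 2)) k ⧸
      (Ideal.span {f, g} : Ideal (MvPolynomial (Fin (d + 2)) k))) E]
    [Module.Finite (MvPolynomial (Fin (d + 2)) k ⧸
      (Ideal.span {f, g} : Ideal (MvPolynomial (Fin (d + 2)) k))) E]
    -- `E` is torsion-free
    (htf : Submodule.torsion (MvPolynomial (Fin (d + 2)) k ⧸
      (Ideal.span {f, g} : Ideal (MvPolynomial (Fin (d + 2)) k))) E = ⊥)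
    -- `ψ`: the matrix of linear forms over `S` lifting the presentation matrix `φ`
    (ψ : Matrix (Fin (d + e)) (Fin d) (MvPolynomial (Fin (d + 2)) k))
    (hψlin : ∀ i j, ψ i j ∈ homogeneousSubmodule (Fin (d + 2)) k 1)
    (φ : Matrix (Fin (d + e)) (Fin d) (MvPolynomial (Fin (d + 2)) k ⧸
      (Ideal.span {f, g} : Ideal (MvPolynomial (Fin (d + 2)) k))))
    (hφψ : ∀ i j, φ i j = Ideal.Quotient.mk _ (ψ i j))
    -- `0 → R^d →φ R^{d+e} →π E → 0` is a (minimal) free resolution, so `pd_R E = 1`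
    -- and `rank E = e`
    (hinj : Function.Injective φ.mulVecLin)
    (π : (Fin (d + e) → (MvPolynomial (Fin (d + 2)) k ⧸
        (Ideal.span {f, g} : Ideal (MvPolynomial (Fin (d + 2)) k)))) →ₗ[MvPolynomial (Fin (d + 2)) k ⧸
        (Ideal.span {f, g} : Ideal (MvPolynomial (Fin (d + 2)) k))] E)
    (hsurj : Function.Surjective π)
    (hker : LinearMap.ker π = LinearMap.range φ.mulVecLin)
    -- `I_1(φ) = (x_1,…,x_{d+2})R`
    (hI1 : Ideal.span {r | ∃ i j, φ i j = r} =
      Ideal.span (Set.range fun t : Fin (d + 2) => Ideal.Quotient.mk _ (X t)))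
    -- `E` is minimally generated by `μ(E) = d+e` elements
    (hμ : ∀ s : Finset E,
      Submodule.span (MvPolynomial (Fin (d + 2)) k ⧸
        (Ideal.span {f, g} : Ideal (MvPolynomial (Fin (d + 2)) k))) (s : Set E) = ⊤ →
      d + e ≤ s.card)
    -- `E` satisfies `G_d`
    (hGd : ∀ (p : Ideal (MvPolynomial (Fin (d + 2)) k ⧸
        (Ideal.span {f, g} : Ideal (MvPolynomial (Fin (d + 2)) k)))) (_ : p.IsPrime) (c : ℕ),
      ringKrullDim (Localization.AtPrime p) = (c : WithBot ℕ∞) → 1 ≤ c → c ≤ d - 1 →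
      ∃ s : Finset (LocalizedModule p.primeCompl E), s.card ≤ c + e - 1 ∧
        Submodule.span (Localization.AtPrime p)
          (s : Set (LocalizedModule p.primeCompl E)) = ⊤)
    -- the defining ideal `L = (ℓ_1,…,ℓ_d,f,g)` of `S(E)` as a quotient of
    -- `B = S ⊗_k T`, with `[ℓ_1 … ℓ_d] = [y_1 … y_{d+e}]·ψ`
    (ℓ : Fin d → B k (d + 2) (d + e))
    (hℓ : ∀ i, ℓ i = ∑ j, (rename Sum.inl (ψ j i)) * X (Sum.inr j))
    (L : Ideal (B k (d + 2) (d + e)))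
    (hL : L = Ideal.span (Set.range ℓ ∪ {rename Sum.inl f, rename Sum.inl g}))
    (σ : Matrix (Fin (d + 2)) (Fin d) (T k (d + e)))
    (hσlin : ∀ t j, σ t j ∈ homogeneousSubmodule (Fin (d + e)) k 1)
    (hσ : ∀ j, ℓ j =
      ∑ t : Fin (d + 2), X (Sum.inl t) * (rename Sum.inr (σ t j) : B k (d + 2) (d + e)))
    -- `ht I(σ) = 3`
    (hht3 : htGE (minorsIdeal σ d) 3)
    (hht3' : ¬ htGE (minorsIdeal σ d) 4) :
    ∃ gEq : Fin (d + 2) → B k (d + 2) (d + e),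
      (∀ i, gEq i ∈ weightedHomogeneousSubmodule k (bwt (d + 2) (d + e)) (1, 2 * d)) ∧
      AcompZ k (d + 2) (d + e) L 1 =
        Submodule.span (T k (d + e)) (Set.range fun i => Ideal.Quotient.mk L (gEq i)) ∧
      (∀ s : Finset (B k (d + 2) (d + e) ⧸ L),
        Submodule.span (T k (d + e)) (s : Set (B k (d + 2) (d + e) ⧸ L)) =
          AcompZ k (d + 2) (d + e) L 1 → d + 2 ≤ s.card) := by
  obtain ⟨F, hF⟩ := exists_quadForm_eq hf
  obtain ⟨G, hG⟩ := exists_quadForm_eq hg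
  have hℓσ (j : Fin d) : overT k (d + 2) (d + e) (ℓ j) = linearForm (σᵀ j) :=
    (congrArg _ (hσ j)).trans (overT_sum_X_mul_rename_inr _)
  have hσψ (j : Fin d) : linearForm (σᵀ j) = ∑ i, (ψ i j).map C * C (X i) := by
    rw [← hℓσ, hℓ, overT_sum_rename_inl_mul_X]
  have hL' : L = (symmetricIdeal σ (F.map C) (G.map C)).comap (overT k (d + 2) (d + e)) :=
    hL.trans (span_eq_comap_symmetricIdeal hF hG hℓσ)
  have hline : IsLineCoprime σ (F.map C) (G.map C) :=
    isLineCoprime_of_satisfiesG (by rw [hF, hG]) (ringKrullDim_quotient_span_pair_le hfg) hφψ hinj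
      (LinearMap.exact_iff.2 hker) hsurj hI1 hGd hσψ
  have hheight : 3 ≤ (complMinorsIdeal σ).height :=
    (le_height_of_htGE hht3).trans (Ideal.height_mono (minorsIdeal_le_complMinorsIdeal σ))
  have hcop : CoprimeMinors σ := coprimeMinors_of_one_lt_height (lt_of_lt_of_le (by decide) hheight)
  obtain ⟨α, hα, β, hβ, γ, hγ, hreg⟩ :=
    exists_isRegularTriple_of_three_le_height (by omega) hheight
  have hspan := AcompZ_one_eq_span hL' hline hcop hreg hα hβ hγ
  exact ⟨_, isWeightedHomogeneous_overT_symm_torsionMatrix hσlin F G, hspan, fun s hs =>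
    card_le_of_span_eq_span_torsionMatrix hL' hline hcop hσlin (hs.trans hspan)⟩

end Stmt15
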